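/- (Theorem 3, upper bound) There exists an absolute constant c > 0 such that for every n ≥ 2, p ≥ 1, and every origin-symmetric convex body K in ℝⁿ, d_ovr(K, L_p^n) ≤ c·√((n+p)/p). Concretely: with C = K°/|K°|^{1/n} and L = |K°|^{−1/n} Z_p°(C), one has K ⊆ L, L is a unit ball of a subspace of L_p, and (|L|/|K|)^{1/n} ≤ c·√((n+p)/p). -/

import Mathlib

open MeasureTheory Set Metric
open scoped ENNReal RealInnerProductSpace NNReal Pointwise

noncomputable section

abbrev E (n : ℕ) := EuclideanSpace ℝ (Fin n)

/-- A star body: compact, origin in the interior, star-shaped with respect to the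
origin, and with continuous Minkowski functional (gauge). -/
def IsStarBody {n : ℕ} (K : Set (E n)) : Prop :=
  IsCompact K ∧ 0 ∈ interior K ∧
    (∀ x ∈ K, ∀ t : ℝ, 0 ≤ t → t ≤ 1 → t • x ∈ K) ∧ Continuous (gauge K)

/-- An origin-symmetric convex body. -/
def IsSymmetricConvexBody {n : ℕ} (K : Set (E n)) : Prop :=
  IsCompact K ∧ Convex ℝ K ∧ 0 ∈ interior K ∧ ∀ x ∈ K, -x ∈ K


/-- D is the unit ball of an n-dimensional subspace of L_p: its gauge to the p-th power
is given by integration of |<x,th>|^p against a finite Borel measure on the sphere. -/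
def IsLpBall (n : ℕ) (p : ℝ) (D : Set (E n)) : Prop :=
  IsSymmetricConvexBody D ∧
    ∃ ν : Measure (sphere (0 : E n) 1), IsFiniteMeasure ν ∧
      ∀ x : E n, gauge D x ^ p = ∫ θ : sphere (0 : E n) 1, |⟪x, (θ : E n)⟫| ^ p ∂ν

/-- Outer volume ratio distance from M to the class of unit balls of subspaces of L_p. -/
def dovrLp (n : ℕ) (p : ℝ) (M : Set (E n)) : ℝ :=
  sInf {r | ∃ D : Set (E n), M ⊆ D ∧ IsLpBall n p D ∧
    r = ((volume D).toReal / (volume M).toReal) ^ ((1 : ℝ) / n)}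

/-- The body Z_p(C), defined via its support function
h_{Z_p(C)}(th) = (∫_C |<x,th>|^p dx)^{1/p}. -/
def Zp (n : ℕ) (p : ℝ) (C : Set (E n)) : Set (E n) :=
  {y | ∀ θ : E n, ⟪y, θ⟫ ≤ (∫ x in C, |⟪x, θ⟫| ^ p) ^ (1 / p)}

/-- The polar set of K with respect to the standard inner product. -/
def polarSet {n : ℕ} (K : Set (E n)) : Set (E n) :=
  {x | ∀ y ∈ K, ⟪x, y⟫ ≤ 1}

/-!
Rescale `K°` to a body `C` of volume `1`. Every `x ∈ K` has `|⟨x, ·⟩| ≤ 1` on `K°`, hence `L_p(C)`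
norm at most `1` after rescaling; the unit ball `M_p` of this norm is `Z_p°(C)`, so `K ⊆ L`, and
projecting the measure `‖x‖ ^ p dx` on `C` radially shows that `L` is an `L_p` ball. The ratio
`|L| / |K|` is then controlled by a lower bound for `|K| |K°|` and an upper bound for `|M_p|`.

*Lower bound for `|K| |K°|`.* Let `N` be the reflected proximal map of `gauge K ^ 2 / 2`, a
nonexpansive map. The Gaussian integral over `V × V`, pulled back along
`(a, b) ↦ (a + τ N b, b - τ N a)` with its Jacobian, does not depend on `τ`, and its integrand is
holomorphic in `t = iτ`. Continued to real `t` close to `1`, the integrand is dominated by the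
pullback of `(x + y, x - y) ↦ exp (-(gauge K x / 4) ^ 2) * exp (-(gauge K° y / 4) ^ 2)` along
`(a, b) ↦ (a + t N b, b + t N a)`, whose integral is a multiple of `|K| |K°|`.

*Upper bound for `|M_p|`.* If `|⟨x, y⟩| ≤ 1` on `C × D`, then `|C| |D| ≤ (c / n) ^ n`: by Plancherel
the integrals of `exp (i m ⟨x, y⟩ / 8)` over `C × D` are small for `m ≥ n`, while a combination of
these exponentials is close to `1`. Apply this to `M_k` and the image of a set `S` under the
gradient of a convex function `ξ ↦ ∫ x in C, Ψ ⟨x, ξ⟩`: the Jacobian of the gradient is bounded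
below on `S` by the same inequality applied to ellipsoids, so `|S| |M_k|` is bounded above. With
`Ψ' = arctan` this bounds `|M_1|`, and with `Ψ' t = t ^ (k - 1)` it bounds the part of `M_k` where
the `L_k` and `L_{2k}` norms are comparable. The rest of `M_{2k}` is contained in `M_k / 4`, so the
bound for `|M_p|` follows by doubling the exponent up to `min p n`.
-/

section Fourier

open scoped FourierTransform

variable {V F : Type*} [NormedAddCommGroup V] [InnerProductSpace ℝ V] [FiniteDimensional ℝ V]
  [MeasurableSpace V] [BorelSpace V]

section Plancherel

variable [NormedAddCommGroup F] [InnerProductSpace ℂ F] [CompleteSpace F]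

theorem coeFn_fourier_toLp_two {f : V → F} (hf : Integrable f) (hf₂ : MemLp f 2) :
    (𝓕 (hf₂.toLp f) : Lp F 2 volume) =ᵐ[volume] 𝓕 f := by
  have hinner : Continuous fun z : V × V => innerₗ V z.1 z.2 := continuous_inner
  have hcont : Continuous (𝓕 f) :=
    VectorFourier.fourierIntegral_continuous Real.continuous_fourierChar hinner hf
  -- The self-adjointness of the Fourier integral identifies both sides as tempered distributions.
  refine ae_eq_of_integral_contDiff_smul_eq (μ := volume)
    ((Lp.memLp _).locallyIntegrable one_le_two) hcont.locallyIntegrable fun g hg hgc => ?_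
  let φ : SchwartzMap V ℂ := HasCompactSupport.toSchwartzMap (f := fun x => (g x : ℂ))
    (hgc.comp_left Complex.ofReal_zero) (Complex.ofRealCLM.contDiff.comp hg)
  have hdist := congrArg (fun T => T φ) (Lp.fourier_toTemperedDistribution_eq (hf₂.toLp f))
  simp only [TemperedDistribution.fourier_apply, Lp.toTemperedDistribution_apply] at hdist
  calc ∫ x, φ x • (𝓕 (hf₂.toLp f) : Lp F 2 (volume : Measure V)) x
      = ∫ x, 𝓕 φ x • hf₂.toLp f x := hdist.symm
    _ = ∫ x, 𝓕 φ x • f x :=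
        integral_congr_ae (hf₂.coeFn_toLp.mono fun x hx => by simp only [hx])
    _ = ∫ x, φ x • 𝓕 f x := by
        have hflip := VectorFourier.integral_fourierIntegral_smul_eq_flip
          (L := innerₗ V) Real.continuous_fourierChar hinner (φ.integrable (μ := volume)) hf
        rw [flip_innerₗ] at hflip
        exact hflip

theorem memLp_fourier_two {f : V → F} (hf : Integrable f) (hf₂ : MemLp f 2) :
    MemLp (𝓕 f) 2 :=
  (Lp.memLp _).ae_eq (coeFn_fourier_toLp_two hf hf₂)

theorem eLpNorm_fourier_two {f : V → F} (hf : Integrable f) (hf₂ : MemLp f 2) :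
    eLpNorm (𝓕 f) 2 volume = eLpNorm f 2 volume := by
  rw [← eLpNorm_congr_ae (coeFn_fourier_toLp_two hf hf₂), ← Lp.enorm_def, ← ofReal_norm,
    Lp.norm_fourier_eq, ofReal_norm, Lp.enorm_def, eLpNorm_congr_ae hf₂.coeFn_toLp]

theorem integral_norm_fourier_sq {f : V → F} (hf : Integrable f) (hf₂ : MemLp f 2) :
    ∫ y, ‖𝓕 f y‖ ^ 2 = ∫ x, ‖f x‖ ^ 2 := by
  have h := eLpNorm_fourier_two hf hf₂
  rw [(memLp_fourier_two hf hf₂).eLpNorm_eq_integral_rpow_norm two_ne_zero ENNReal.ofNat_ne_top,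
    hf₂.eLpNorm_eq_integral_rpow_norm two_ne_zero ENNReal.ofNat_ne_top,
    ENNReal.ofReal_eq_ofReal_iff (by positivity) (by positivity),
    Real.rpow_left_inj (by positivity) (by positivity) (by norm_num)] at h
  simpa using h

end Plancherel

theorem norm_integral_sq_le [NormedAddCommGroup F] [NormedSpace ℝ F] {α : Type*}
    [MeasurableSpace α] {μ : Measure α} [IsFiniteMeasure μ] {g : α → F} (hg : MemLp g 2 μ) :
    ‖∫ y, g y ∂μ‖ ^ 2 ≤ (∫ y, ‖g y‖ ^ 2 ∂μ) * μ.real univ := by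
  have holder := integral_mul_le_Lp_mul_Lq_of_nonneg (f := fun y => ‖g y‖) (g := fun _ => (1 : ℝ))
    Real.HolderConjugate.two_two (.of_forall fun _ => norm_nonneg _)
    (.of_forall fun _ => zero_le_one) (by simpa using hg.norm) (memLp_const _)
  simp only [mul_one, Real.rpow_two, one_pow, integral_const, smul_eq_mul,
    ← Real.sqrt_eq_rpow] at holder
  have hmoment : 0 ≤ ∫ y, ‖g y‖ ^ 2 ∂μ := integral_nonneg fun y => by positivity
  calc ‖∫ y, g y ∂μ‖ ^ 2 ≤ (√(∫ y, ‖g y‖ ^ 2 ∂μ) * √(μ.real univ)) ^ 2 := by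
        gcongr
        exact (norm_integral_le_integral_norm g).trans holder
    _ = _ := by rw [mul_pow, Real.sq_sqrt hmoment, Real.sq_sqrt measureReal_nonneg]

theorem setIntegral_cexp_inner_eq_fourier {C : Set V} (hC : MeasurableSet C) (l : ℝ) (y : V) :
    ∫ x in C, Complex.exp ((l * ⟪x, y⟫ : ℝ) * Complex.I) =
      𝓕 (C.indicator fun _ => (1 : ℂ)) ((-(l / (2 * Real.pi))) • y) := by
  rw [Real.fourier_eq', ← integral_indicator hC]
  refine integral_congr_ae (.of_forall fun x => ?_)
  by_cases hx : x ∈ C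
  · simp only [hx, indicator_of_mem, smul_eq_mul, mul_one, real_inner_smul_right]
    congr 3
    field_simp
  · simp [hx]

theorem norm_setIntegral_cexp_inner_sq_le {C D : Set V} (hC : MeasurableSet C)
    (hCfin : volume C ≠ ∞) (hDfin : volume D ≠ ∞) {l : ℝ} (hl : 0 < l) :
    ‖∫ y in D, ∫ x in C, Complex.exp ((l * ⟪x, y⟫ : ℝ) * Complex.I)‖ ^ 2 ≤
      (2 * Real.pi / l) ^ Module.finrank ℝ V * volume.real C * volume.real D := by
  have hpi := Real.pi_pos
  set f : V → ℂ := C.indicator fun _ => 1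
  set c := -(l / (2 * Real.pi))
  have hf : Integrable f := (integrable_indicator_iff hC).2 (integrableOn_const hCfin)
  have hf₂ : MemLp f 2 := memLp_indicator_const 2 hC 1 (Or.inr hCfin)
  have hc : c ≠ 0 := by simp [c, hl.ne', hpi.ne']
  have hnorm : ∫ x, ‖f x‖ ^ 2 = volume.real C := by
    rw [← integral_indicator_one hC]
    congr with x
    by_cases hx : x ∈ C <;> simp [f, hx]
  have hcD : volume.real (c • D) = |c| ^ Module.finrank ℝ V * volume.real D := by
    simp [Measure.real, Measure.addHaar_smul]
  have : IsFiniteMeasure (volume.restrict (c • D)) :=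
    ⟨by simpa [Measure.addHaar_smul] using
      ENNReal.mul_lt_top (ENNReal.pow_lt_top ENNReal.ofReal_lt_top) hDfin.lt_top⟩
  have hF := memLp_fourier_two hf hf₂
  calc _ = (|c| ^ Module.finrank ℝ V)⁻¹ ^ 2 * ‖∫ y in c • D, 𝓕 f y‖ ^ 2 := by
        simp_rw [setIntegral_cexp_inner_eq_fourier hC]
        rw [Measure.setIntegral_comp_smul volume _ D hc, norm_smul, mul_pow]
        simp [f]
    _ ≤ (|c| ^ Module.finrank ℝ V)⁻¹ ^ 2 *
          (volume.real C * (|c| ^ Module.finrank ℝ V * volume.real D)) := by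
        rw [← hnorm, ← integral_norm_fourier_sq hf hf₂, ← hcD]
        gcongr
        refine (norm_integral_sq_le (hF.restrict (c • D))).trans ?_
        rw [measureReal_restrict_apply_univ]
        exact mul_le_mul_of_nonneg_right (setIntegral_le_integral
          (hF.integrable_norm_pow two_ne_zero) (.of_forall fun _ => by positivity))
          measureReal_nonneg
    _ = _ := by
        have habs : 2 * Real.pi / l = |c|⁻¹ := by
          rw [abs_neg, abs_of_pos (by positivity), inv_div]
        have hpow : |c| ^ Module.finrank ℝ V ≠ 0 := pow_ne_zero _ (abs_ne_zero.2 hc)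
        simp only [habs, inv_pow]
        field_simp

end Fourier

section HighPass

/-- A polynomial divisible by `z ^ n` that is close to `1` near the point `z = 1` of the unit
circle: the upper half of the binomial expansion of `(z + (1 - z)) ^ (2 * n)`. -/
def highPass (n : ℕ) (z : ℂ) : ℂ :=
  ∑ j ∈ Finset.Icc n (2 * n), ((2 * n).choose j : ℂ) * (z ^ j * (1 - z) ^ (2 * n - j))

theorem one_sub_highPass (n : ℕ) (z : ℂ) :
    1 - highPass n z =
      ∑ j ∈ Finset.range n, ((2 * n).choose j : ℂ) * (z ^ j * (1 - z) ^ (2 * n - j)) := by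
  have hbinom : (1 : ℂ) = ∑ j ∈ Finset.range (2 * n + 1),
      ((2 * n).choose j : ℂ) * (z ^ j * (1 - z) ^ (2 * n - j)) := by
    simpa [mul_comm] using add_pow z (1 - z) (2 * n)
  rw [sub_eq_iff_eq_add, highPass, ← Finset.Ico_add_one_right_eq_Icc, Finset.range_eq_Ico,
    Finset.sum_Ico_consecutive _ n.zero_le (by omega), ← Finset.range_eq_Ico, ← hbinom]

theorem norm_one_sub_highPass_le (n : ℕ) {z : ℂ} (hz : ‖z‖ = 1) (hz_near : ‖1 - z‖ ≤ 1 / 8) :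
    ‖1 - highPass n z‖ ≤ 1 / 2 := by
  have hterm : ∀ j ∈ Finset.range n,
      ‖((2 * n).choose j : ℂ) * (z ^ j * (1 - z) ^ (2 * n - j))‖ ≤
        ((2 * n).choose j : ℝ) * (1 / 8) ^ (n + 1) := by
    intro j hj
    rw [Finset.mem_range] at hj
    rw [norm_mul, norm_mul, norm_pow, norm_pow, hz, one_pow, one_mul, Complex.norm_natCast]
    gcongr
    exact (pow_le_pow_left₀ (norm_nonneg _) hz_near _).trans
      (pow_le_pow_of_le_one (by norm_num) (by norm_num) (by omega))
  have hchoose : ∑ j ∈ Finset.range n, ((2 * n).choose j : ℝ) ≤ 4 ^ n := by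
    calc _ ≤ ∑ j ∈ Finset.range (2 * n + 1), ((2 * n).choose j : ℝ) :=
          Finset.sum_le_sum_of_subset_of_nonneg (Finset.range_mono (by omega))
            fun _ _ _ => by positivity
      _ = 4 ^ n := by
          have htotal := Nat.sum_range_choose (2 * n)
          rw [pow_mul] at htotal
          exact_mod_cast htotal
  calc ‖1 - highPass n z‖ ≤ ∑ j ∈ Finset.range n, ((2 * n).choose j : ℝ) * (1 / 8) ^ (n + 1) := by
        rw [one_sub_highPass]
        exact norm_sum_le_of_le _ hterm
    _ ≤ 4 ^ n * (1 / 8) ^ (n + 1) := by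
        rw [← Finset.sum_mul]
        gcongr
    _ = (1 / 2) ^ n / 8 := by
        rw [pow_succ, ← mul_assoc, ← mul_pow]
        norm_num
        ring
    _ ≤ 1 / 2 := by linarith [pow_le_one₀ (n := n) (by norm_num : (0 : ℝ) ≤ 1 / 2) (by norm_num)]

variable {α : Type*} [MeasurableSpace α] {μ : Measure α} [IsFiniteMeasure μ] {Z : α → ℂ}

theorem integrable_pow_mul_one_sub_pow (hZ : AEStronglyMeasurable Z μ) (hZnorm : ∀ a, ‖Z a‖ = 1)
    (j k : ℕ) : Integrable (fun a => Z a ^ j * (1 - Z a) ^ k) μ := by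
  refine .of_bound (by fun_prop) (2 ^ k) (.of_forall fun a => ?_)
  rw [norm_mul, norm_pow, norm_pow, hZnorm, one_pow, one_mul]
  gcongr
  calc ‖1 - Z a‖ ≤ ‖(1 : ℂ)‖ + ‖Z a‖ := norm_sub_le _ _
    _ = 2 := by rw [hZnorm, norm_one]; norm_num

theorem norm_integral_pow_mul_one_sub_pow_le (hZ : AEStronglyMeasurable Z μ)
    (hZnorm : ∀ a, ‖Z a‖ = 1) {n : ℕ} {B : ℝ} (hmoment : ∀ m ≥ n, ‖∫ a, Z a ^ m ∂μ‖ ≤ B) :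
    ∀ k : ℕ, ∀ j ≥ n, ‖∫ a, Z a ^ j * (1 - Z a) ^ k ∂μ‖ ≤ 2 ^ k * B
  | 0, j, hj => by simpa using hmoment j hj
  | k + 1, j, hj => by
    have hsplit : ∫ a, Z a ^ j * (1 - Z a) ^ (k + 1) ∂μ =
        (∫ a, Z a ^ j * (1 - Z a) ^ k ∂μ) - ∫ a, Z a ^ (j + 1) * (1 - Z a) ^ k ∂μ := by
      rw [← integral_sub (integrable_pow_mul_one_sub_pow hZ hZnorm _ _)
        (integrable_pow_mul_one_sub_pow hZ hZnorm _ _)]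
      congr with a
      ring
    rw [hsplit, pow_succ]
    linarith [norm_sub_le (∫ a, Z a ^ j * (1 - Z a) ^ k ∂μ)
        (∫ a, Z a ^ (j + 1) * (1 - Z a) ^ k ∂μ),
      norm_integral_pow_mul_one_sub_pow_le hZ hZnorm hmoment k j hj,
      norm_integral_pow_mul_one_sub_pow_le hZ hZnorm hmoment k (j + 1) (by omega)]

theorem integrable_highPass (hZ : AEStronglyMeasurable Z μ) (hZnorm : ∀ a, ‖Z a‖ = 1) (n : ℕ) :
    Integrable (fun a => highPass n (Z a)) μ :=
  integrable_finsetSum _ fun j _ =>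
    (integrable_pow_mul_one_sub_pow hZ hZnorm j (2 * n - j)).const_mul _

theorem norm_integral_highPass_le (hZ : AEStronglyMeasurable Z μ) (hZnorm : ∀ a, ‖Z a‖ = 1)
    {n : ℕ} {B : ℝ} (hmoment : ∀ m ≥ n, ‖∫ a, Z a ^ m ∂μ‖ ≤ B) :
    ‖∫ a, highPass n (Z a) ∂μ‖ ≤ 9 ^ n * B := by
  have hB : 0 ≤ B := (norm_nonneg _).trans (hmoment n le_rfl)
  simp only [highPass]
  rw [integral_finsetSum _ fun j _ => (integrable_pow_mul_one_sub_pow hZ hZnorm _ _).const_mul _]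
  simp_rw [integral_const_mul]
  calc _ ≤ ∑ j ∈ Finset.Icc n (2 * n), ((2 * n).choose j : ℝ) * (2 ^ (2 * n - j) * B) := by
        refine norm_sum_le_of_le _ fun j hj => ?_
        rw [norm_mul, Complex.norm_natCast]
        gcongr
        exact norm_integral_pow_mul_one_sub_pow_le hZ hZnorm hmoment _ j (Finset.mem_Icc.1 hj).1
    _ ≤ ∑ j ∈ Finset.range (2 * n + 1), ((2 * n).choose j : ℝ) * (2 ^ (2 * n - j) * B) := by
        refine Finset.sum_le_sum_of_subset_of_nonneg (fun j hj => ?_) fun _ _ _ => by positivity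
        rw [Finset.mem_range]
        exact Nat.lt_succ_of_le (Finset.mem_Icc.1 hj).2
    _ = (∑ j ∈ Finset.range (2 * n + 1), 1 ^ j * 2 ^ (2 * n - j) * ((2 * n).choose j : ℝ)) * B := by
        rw [Finset.sum_mul]
        exact Finset.sum_congr rfl fun j _ => by ring
    _ = 9 ^ n * B := by
        rw [← add_pow, pow_mul]
        norm_num

theorem measureReal_univ_le_of_norm_integral_pow_le (hZ : AEStronglyMeasurable Z μ)
    (hZnorm : ∀ a, ‖Z a‖ = 1) (hZ_near : ∀ᵐ a ∂μ, ‖1 - Z a‖ ≤ 1 / 8) {n : ℕ} {B : ℝ}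
    (hmoment : ∀ m ≥ n, ‖∫ a, Z a ^ m ∂μ‖ ≤ B) : μ.real univ ≤ 2 * 9 ^ n * B := by
  have hclose : ‖(μ.real univ : ℂ) - ∫ a, highPass n (Z a) ∂μ‖ ≤ 1 / 2 * μ.real univ := by
    have hone : (μ.real univ : ℂ) = ∫ _, (1 : ℂ) ∂μ := by simp
    rw [hone, ← integral_sub (integrable_const 1) (integrable_highPass hZ hZnorm n)]
    exact norm_integral_le_of_norm_le_const
      (hZ_near.mono fun a => norm_one_sub_highPass_le n (hZnorm a))
  have htriangle : μ.real univ ≤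
      ‖(μ.real univ : ℂ) - ∫ a, highPass n (Z a) ∂μ‖ + ‖∫ a, highPass n (Z a) ∂μ‖ := by
    simpa [abs_of_nonneg] using norm_add_le ((μ.real univ : ℂ) - ∫ a, highPass n (Z a) ∂μ)
      (∫ a, highPass n (Z a) ∂μ)
  linarith [norm_integral_highPass_le hZ hZnorm hmoment]

end HighPass

section BlaschkeSantalo

variable {V : Type*} [NormedAddCommGroup V] [InnerProductSpace ℝ V] [FiniteDimensional ℝ V]
  [MeasurableSpace V] [BorelSpace V]

theorem volume_mul_volume_le_sqrt_of_abs_inner_le_one {C D : Set V}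
    (hC : MeasurableSet C) (hCfin : volume C ≠ ∞) (hD : MeasurableSet D) (hDfin : volume D ≠ ∞)
    (hpolar : ∀ x ∈ C, ∀ y ∈ D, |⟪x, y⟫| ≤ 1) {n : ℕ} (hn : 0 < n)
    (hdim : Module.finrank ℝ V = n) :
    volume.real C * volume.real D ≤
      2 * 9 ^ n * √((2 * Real.pi * 8 / n) ^ n * (volume.real C * volume.real D)) := by
  have : IsFiniteMeasure (volume.restrict C) := ⟨by simpa using hCfin.lt_top⟩
  have : IsFiniteMeasure (volume.restrict D) := ⟨by simpa using hDfin.lt_top⟩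
  let μ := (volume.restrict D).prod (volume.restrict C)
  let Z : V × V → ℂ := fun a => Complex.exp ((1 / 8 * ⟪a.2, a.1⟫ : ℝ) * Complex.I)
  have hZ : AEStronglyMeasurable Z μ := Continuous.aestronglyMeasurable (by fun_prop)
  have hZnorm (a) : ‖Z a‖ = 1 := Complex.norm_exp_ofReal_mul_I _
  have hZ_near : ∀ᵐ a ∂μ, ‖1 - Z a‖ ≤ 1 / 8 := by
    simp only [μ, Measure.prod_restrict]
    refine ae_restrict_of_forall_mem (hD.prod hC) fun a ha => ?_
    simp only [Z]
    rw [norm_sub_rev, mul_comm (Complex.ofReal _)]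
    refine Real.norm_exp_I_mul_ofReal_sub_one_le.trans ?_
    rw [Real.norm_eq_abs, abs_mul, abs_of_pos (by norm_num : (0 : ℝ) < 1 / 8)]
    linarith [hpolar a.2 ha.2 a.1 ha.1]
  have hmoment : ∀ m ≥ n, ‖∫ a, Z a ^ m ∂μ‖ ≤
      √((2 * Real.pi * 8 / n) ^ n * (volume.real C * volume.real D)) := by
    intro m hm
    have hn' : (0 : ℝ) < n := by exact_mod_cast hn
    have hnm : (n : ℝ) ≤ m := by exact_mod_cast hm
    have hm' : (0 : ℝ) < m := hn'.trans_le hnm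
    have hpow (a) : Z a ^ m = Complex.exp ((m / 8 * ⟪a.2, a.1⟫ : ℝ) * Complex.I) := by
      rw [← Complex.exp_nat_mul]
      congr 1
      push_cast
      ring
    simp_rw [hpow]
    rw [integral_prod _ (.of_bound (Continuous.aestronglyMeasurable (by fun_prop)) 1
      (.of_forall fun a => (Complex.norm_exp_ofReal_mul_I _).le))]
    refine Real.le_sqrt_of_sq_le
      ((norm_setIntegral_cexp_inner_sq_le hC hCfin hDfin (by positivity)).trans ?_)
    rw [hdim, ← mul_assoc, div_div_eq_mul_div]
    gcongr
  simpa [μ, measureReal_def, ← univ_prod_univ, mul_comm] using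
    measureReal_univ_le_of_norm_integral_pow_le hZ hZnorm hZ_near hmoment

theorem volume_mul_volume_le_of_abs_inner_le_one {C D : Set V}
    (hC : MeasurableSet C) (hCfin : volume C ≠ ∞) (hD : MeasurableSet D) (hDfin : volume D ≠ ∞)
    (hpolar : ∀ x ∈ C, ∀ y ∈ D, |⟪x, y⟫| ≤ 1) {n : ℕ} (hn : 0 < n)
    (hdim : Module.finrank ℝ V = n) :
    volume.real C * volume.real D ≤ (20000 / n) ^ n := by
  set v := volume.real C * volume.real D
  have hv : 0 ≤ v := by positivity
  have hsq : v * v ≤ 4 * 81 ^ n * (2 * Real.pi * 8 / n) ^ n * v := by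
    calc v * v ≤ (2 * 9 ^ n * √((2 * Real.pi * 8 / n) ^ n * v)) ^ 2 := by
          rw [← sq]
          gcongr
          exact volume_mul_volume_le_sqrt_of_abs_inner_le_one hC hCfin hD hDfin hpolar hn hdim
      _ = 4 * 81 ^ n * (2 * Real.pi * 8 / n) ^ n * v := by
          rw [mul_pow, Real.sq_sqrt (by positivity), mul_pow, ← pow_mul, mul_comm n, pow_mul]
          norm_num
          ring
  calc v ≤ 4 * 81 ^ n * (2 * Real.pi * 8 / n) ^ n := by
        rcases hv.eq_or_lt with hzero | hpos
        · rw [← hzero]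
          positivity
        · exact le_of_mul_le_mul_right hsq hpos
    _ ≤ 4 ^ n * 81 ^ n * (2 * Real.pi * 8 / n) ^ n := by
        gcongr
        exact le_self_pow₀ (by norm_num) hn.ne'
    _ = (4 * 81 * (2 * Real.pi * 8 / n)) ^ n := by rw [mul_pow, mul_pow]
    _ ≤ (20000 / n) ^ n := by
        gcongr
        rw [← mul_div_assoc]
        gcongr
        nlinarith [Real.pi_lt_d2]

theorem volume_mul_volume_le_of_abs_inner_le {n : ℕ} (hn : 0 < n)
    (hdim : Module.finrank ℝ V = n) {C D : Set V} {κ : ℝ} (hκ : 0 < κ)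
    (hC : MeasurableSet C) (hCfin : volume C ≠ ∞) (hD : MeasurableSet D) (hDfin : volume D ≠ ∞)
    (hCD : ∀ x ∈ C, ∀ y ∈ D, |⟪x, y⟫| ≤ κ) :
    volume.real C * volume.real D ≤ (20000 * κ / n) ^ n := by
  have hscale : volume.real (κ⁻¹ • C) = (κ ^ n)⁻¹ * volume.real C := by
    rw [measureReal_def, Measure.addHaar_smul, hdim, ENNReal.toReal_mul,
      ENNReal.toReal_ofReal (abs_nonneg _), abs_of_pos (by positivity), inv_pow, measureReal_def]
  have hfin : volume (κ⁻¹ • C) ≠ ∞ := by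
    rw [Measure.addHaar_smul]
    exact ENNReal.mul_ne_top ENNReal.ofReal_ne_top hCfin
  have santalo : volume.real (κ⁻¹ • C) * volume.real D ≤ (20000 / n) ^ n := by
    refine volume_mul_volume_le_of_abs_inner_le_one (hC.const_smul₀ _) hfin hD hDfin ?_ hn hdim
    rintro _ ⟨x, hx, rfl⟩ y hy
    rw [real_inner_smul_left, abs_mul, abs_of_pos (by positivity), inv_mul_le_iff₀ hκ, mul_one]
    exact hCD x hx y hy
  calc volume.real C * volume.real D
      = κ ^ n * ((κ ^ n)⁻¹ * volume.real C * volume.real D) := by field_simp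
    _ ≤ κ ^ n * (20000 / n) ^ n := by rw [← hscale]; gcongr
    _ = (20000 * κ / n) ^ n := by rw [← mul_pow]; ring

end BlaschkeSantalo

section PolarSet

variable {n : ℕ} {K : Set (E n)}

theorem isClosed_polarSet (K : Set (E n)) : IsClosed (polarSet K) := by
  have hinter : polarSet K = ⋂ y ∈ K, {x | ⟪x, y⟫ ≤ 1} := by
    ext x
    simp [polarSet]
  rw [hinter]
  exact isClosed_biInter fun y _ => isClosed_le (by fun_prop) continuous_const

theorem convex_polarSet (K : Set (E n)) : Convex ℝ (polarSet K) := by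
  intro x hx y hy a b ha hb hab z hz
  rw [inner_add_left, real_inner_smul_left, real_inner_smul_left]
  nlinarith [hx z hz, hy z hz]

theorem isBounded_polarSet (hK : K ∈ nhds 0) : Bornology.IsBounded (polarSet K) := by
  obtain ⟨r, hr, hball⟩ := Metric.mem_nhds_iff.1 hK
  refine (isBounded_closedBall (x := (0 : E n)) (r := 2 / r)).subset fun x hx => ?_
  rw [mem_closedBall_zero_iff]
  rcases eq_or_ne x 0 with rfl | hx0
  · rw [norm_zero]
    positivity
  have hxpos : 0 < ‖x‖ := norm_pos_iff.2 hx0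
  have hmem : (r / 2 / ‖x‖) • x ∈ ball (0 : E n) r := by
    rw [mem_ball_zero_iff, norm_smul, Real.norm_of_nonneg (by positivity),
      div_mul_cancel₀ _ hxpos.ne']
    linarith
  have hinner := hx _ (hball hmem)
  rw [real_inner_smul_right, real_inner_self_eq_norm_sq] at hinner
  rw [le_div_iff₀ hr]
  field_simp at hinner
  linarith

theorem polarSet_mem_nhds_zero (hK : Bornology.IsBounded K) : polarSet K ∈ nhds 0 := by
  obtain ⟨R, hR, hball⟩ := hK.subset_closedBall_lt 0 0
  refine Metric.mem_nhds_iff.2 ⟨R⁻¹, by positivity, fun x hx y hy => ?_⟩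
  rw [mem_ball_zero_iff] at hx
  have hynorm := mem_closedBall_zero_iff.1 (hball hy)
  calc ⟪x, y⟫ ≤ ‖x‖ * ‖y‖ := real_inner_le_norm _ _
    _ ≤ R⁻¹ * R := by gcongr
    _ = 1 := inv_mul_cancel₀ hR.ne'

theorem gauge_polarSet_le {y : E n} {r : ℝ} (hr : 0 ≤ r) (hy : ∀ z ∈ K, ⟪y, z⟫ ≤ r) :
    gauge (polarSet K) y ≤ r := by
  refine le_of_forall_pos_le_add fun ε hε => gauge_le_of_mem (by positivity) ?_
  rw [mem_smul_set_iff_inv_smul_mem₀ (by positivity)]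
  intro z hz
  rw [real_inner_smul_left, inv_mul_le_iff₀ (by positivity)]
  linarith [hy z hz]

end PolarSet

namespace IsSymmetricConvexBody

variable {n : ℕ} {K : Set (E n)}

theorem isCompact (hK : IsSymmetricConvexBody K) : IsCompact K := hK.1

theorem convex (hK : IsSymmetricConvexBody K) : Convex ℝ K := hK.2.1

theorem mem_nhds_zero (hK : IsSymmetricConvexBody K) : K ∈ nhds (0 : E n) :=
  mem_interior_iff_mem_nhds.1 hK.2.2.1

theorem neg_mem (hK : IsSymmetricConvexBody K) {x : E n} (hx : x ∈ K) : -x ∈ K :=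
  hK.2.2.2 x hx

theorem zero_mem (hK : IsSymmetricConvexBody K) : (0 : E n) ∈ K := mem_of_mem_nhds hK.mem_nhds_zero

theorem absorbent (hK : IsSymmetricConvexBody K) : Absorbent ℝ K :=
  absorbent_nhds_zero hK.mem_nhds_zero

theorem continuous_gauge (hK : IsSymmetricConvexBody K) : Continuous (gauge K) :=
  _root_.continuous_gauge hK.convex hK.mem_nhds_zero

theorem gauge_neg (hK : IsSymmetricConvexBody K) (x : E n) : gauge K (-x) = gauge K x :=
  _root_.gauge_neg hK.2.2.2 x

theorem gauge_add_le (hK : IsSymmetricConvexBody K) (x y : E n) :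
    gauge K (x + y) ≤ gauge K x + gauge K y :=
  _root_.gauge_add_le hK.convex hK.absorbent x y

theorem gauge_smul (hK : IsSymmetricConvexBody K) (r : ℝ) (x : E n) :
    gauge K (r • x) = |r| * gauge K x :=
  _root_.gauge_smul (𝕜 := ℝ) ((balanced_iff_neg_mem hK.convex).2 hK.2.2.2) r x

theorem gauge_le_one_iff (hK : IsSymmetricConvexBody K) {x : E n} : gauge K x ≤ 1 ↔ x ∈ K := by
  rw [gauge_le_one_iff_mem_closure hK.convex hK.mem_nhds_zero, hK.isCompact.isClosed.closure_eq]

theorem exists_norm_le (hK : IsSymmetricConvexBody K) :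
    ∃ R : ℝ, 0 < R ∧ ∀ x : E n, ‖x‖ ≤ R * gauge K x := by
  obtain ⟨R, hR, hball⟩ := hK.isCompact.isBounded.subset_closedBall_lt 0 0
  exact ⟨R, hR, fun x =>
    (div_le_iff₀' hR).1 (le_gauge_of_subset_closedBall hK.absorbent hR.le hball)⟩

theorem exists_gauge_le (hK : IsSymmetricConvexBody K) :
    ∃ R : ℝ, 0 < R ∧ ∀ x : E n, gauge K x ≤ R * ‖x‖ := by
  obtain ⟨r, hr, hball⟩ := Metric.mem_nhds_iff.1 hK.mem_nhds_zero
  refine ⟨r⁻¹, by positivity, fun x => ?_⟩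
  rw [inv_mul_eq_div, le_div_iff₀' hr]
  exact mul_gauge_le_norm hball

theorem eq_zero_of_gauge_eq_zero (hK : IsSymmetricConvexBody K) {x : E n}
    (hx : gauge K x = 0) : x = 0 :=
  (gauge_eq_zero hK.absorbent ((NormedSpace.isVonNBounded_iff ℝ).2 hK.isCompact.isBounded)).1 hx

theorem inv_gauge_smul_mem (hK : IsSymmetricConvexBody K) (x : E n) : (gauge K x)⁻¹ • x ∈ K := by
  rw [← hK.gauge_le_one_iff, hK.gauge_smul, abs_of_nonneg (inv_nonneg.2 (gauge_nonneg x))]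
  exact inv_mul_le_one

theorem polarSet (hK : IsSymmetricConvexBody K) : IsSymmetricConvexBody (polarSet K) := by
  refine ⟨isCompact_of_isClosed_isBounded (isClosed_polarSet K)
      (isBounded_polarSet hK.mem_nhds_zero), convex_polarSet K,
    mem_interior_iff_mem_nhds.2 (polarSet_mem_nhds_zero hK.isCompact.isBounded),
    fun x hx y hy => ?_⟩
  rw [inner_neg_left, ← inner_neg_right]
  exact hx _ (hK.neg_mem hy)

theorem inner_le_gauge_mul_gauge_polarSet (hK : IsSymmetricConvexBody K) (x y : E n) :
    ⟪x, y⟫ ≤ gauge K y * gauge (_root_.polarSet K) x := by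
  rcases (gauge_nonneg y : 0 ≤ gauge K y).eq_or_lt with hzero | hy
  · simp [hK.eq_zero_of_gauge_eq_zero hzero.symm]
  rcases (gauge_nonneg x : 0 ≤ gauge (_root_.polarSet K) x).eq_or_lt with hzero | hx
  · simp [hK.polarSet.eq_zero_of_gauge_eq_zero hzero.symm]
  have hinner := hK.polarSet.inv_gauge_smul_mem x _ (hK.inv_gauge_smul_mem y)
  rwa [real_inner_smul_left, real_inner_smul_right, inv_mul_le_iff₀ hx, mul_one,
    inv_mul_le_iff₀ hy] at hinner

theorem volume_ne_top (hK : IsSymmetricConvexBody K) : volume K ≠ ∞ :=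
  hK.isCompact.measure_lt_top.ne

theorem volume_real_pos (hK : IsSymmetricConvexBody K) : 0 < volume.real K :=
  ENNReal.toReal_pos (Measure.measure_pos_of_mem_nhds volume hK.mem_nhds_zero).ne' hK.volume_ne_top

theorem integral_exp_neg_gauge_sq (hK : IsSymmetricConvexBody K) :
    ∫ x, Real.exp (-gauge K x ^ 2) = Real.Gamma (n / 2 + 1) * volume.real K := by
  have hvolume := measure_lt_one_eq_integral_div_gamma (volume : Measure (E n)) (g := gauge K)
    gauge_zero hK.gauge_neg hK.gauge_add_le hK.eq_zero_of_gauge_eq_zero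
    (fun r x => (hK.gauge_smul r x).le) two_pos
  have hinterior : {x | gauge K x < 1} = interior K := by
    ext x
    exact gauge_lt_one_iff_mem_interior hK.convex hK.mem_nhds_zero
  have hGamma : 0 < Real.Gamma ((n : ℝ) / 2 + 1) := Real.Gamma_pos_of_pos (by positivity)
  simp only [hinterior, Real.rpow_two, finrank_euclideanSpace, Fintype.card_fin,
    measure_interior_of_null_frontier (hK.convex.addHaar_frontier volume)] at hvolume
  rw [measureReal_def, hvolume, ENNReal.toReal_ofReal
    (div_nonneg (integral_nonneg fun x => (Real.exp_pos _).le) hGamma.le),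
    mul_div_cancel₀ _ hGamma.ne']

theorem lintegral_exp_neg_gauge_div_sq (hK : IsSymmetricConvexBody K) {c : ℝ} (hc : 0 < c) :
    ∫⁻ x, ENNReal.ofReal (Real.exp (-(gauge K x / c) ^ 2)) =
      ENNReal.ofReal (c ^ n * Real.Gamma (n / 2 + 1) * volume.real K) := by
  have hint : ∫ x, Real.exp (-(gauge K x / c) ^ 2) =
      c ^ n * Real.Gamma (n / 2 + 1) * volume.real K := by
    have hscale := Measure.integral_comp_inv_smul_of_nonneg volume
      (fun x => Real.exp (-gauge K x ^ 2)) hc.le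
    simpa only [hK.gauge_smul, abs_of_pos (inv_pos.2 hc), inv_mul_eq_div,
      hK.integral_exp_neg_gauge_sq, finrank_euclideanSpace, Fintype.card_fin, smul_eq_mul,
      mul_assoc] using hscale
  have hne : ∫ x, Real.exp (-(gauge K x / c) ^ 2) ≠ 0 := by
    rw [hint]
    exact (mul_pos (mul_pos (pow_pos hc n) (Real.Gamma_pos_of_pos (by positivity)))
      hK.volume_real_pos).ne'
  rw [← hint, ofReal_integral_eq_lintegral_ofReal (.of_integral_ne_zero hne)
    (.of_forall fun x => (Real.exp_pos _).le)]

end IsSymmetricConvexBody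

section Proximal

variable {n : ℕ} {K : Set (E n)}

/-- `u` is a subgradient at `x` of the squared gauge `gauge K ^ 2 / 2`. -/
def IsGaugeSqSubgradient (K : Set (E n)) (u x : E n) : Prop :=
  ∀ z, gauge K x ^ 2 / 2 + ⟪u, z - x⟫ ≤ gauge K z ^ 2 / 2

theorem le_of_forall_le_add_mul {a b m : ℝ} (hab : ∀ s, 0 < s → s ≤ 1 → a ≤ b + s * m) :
    a ≤ b := by
  refine le_of_forall_pos_le_add fun ε hε => ?_
  have hs := min_le_right 1 (ε / (|m| + 1))
  rw [le_div_iff₀ (by positivity)] at hs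
  have hs_pos : 0 < min 1 (ε / (|m| + 1)) := by positivity
  nlinarith [hab _ hs_pos (min_le_left _ _), le_abs_self m]

namespace IsGaugeSqSubgradient

variable {u v x y : E n}

theorem inner_eq (hK : IsSymmetricConvexBody K) (hx : IsGaugeSqSubgradient K u x) :
    ⟪u, x⟫ = gauge K x ^ 2 := by
  have hscale (s : ℝ) : s * ⟪u, x⟫ ≤ (s + s ^ 2 / 2) * gauge K x ^ 2 := by
    have hle := hx ((1 + s) • x)
    rw [hK.gauge_smul, mul_pow, sq_abs, show (1 + s) • x - x = s • x by module,
      real_inner_smul_right] at hle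
    linarith
  refine le_antisymm (le_of_forall_le_add_mul (m := gauge K x ^ 2 / 2) fun s hs _ => ?_)
    (le_of_forall_le_add_mul (m := gauge K x ^ 2 / 2) fun s hs _ => ?_)
  · exact le_of_mul_le_mul_left (by linarith [hscale s]) hs
  · exact le_of_mul_le_mul_left (by linarith [hscale (-s)]) hs

theorem gauge_polarSet_le (hK : IsSymmetricConvexBody K) (hx : IsGaugeSqSubgradient K u x) :
    gauge (polarSet K) u ≤ gauge K x := by
  have hg := gauge_nonneg (s := K) x
  refine _root_.gauge_polarSet_le hg fun z hz => le_of_forall_le_add_mul (m := 1) fun s hs _ => ?_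
  have ht : 0 < gauge K x + s := by linarith
  have hle := hx ((gauge K x + s) • z)
  rw [hK.gauge_smul, abs_of_pos ht, inner_sub_right, real_inner_smul_right, hx.inner_eq hK] at hle
  have hz1 : ((gauge K x + s) * gauge K z) ^ 2 ≤ (gauge K x + s) ^ 2 :=
    pow_le_pow_left₀ (mul_nonneg ht.le (gauge_nonneg z))
      (mul_le_of_le_one_right ht.le (hK.gauge_le_one_iff.2 hz)) 2
  refine le_of_mul_le_mul_left (a := gauge K x + s) ?_ ht
  nlinarith

theorem monotone (hx : IsGaugeSqSubgradient K u x) (hy : IsGaugeSqSubgradient K v y) :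
    0 ≤ ⟪x - y, u - v⟫ := by
  have hle := hx y
  rw [← neg_sub x y, inner_neg_right] at hle
  rw [inner_sub_right, real_inner_comm u, real_inner_comm v]
  linarith [hy x]

end IsGaugeSqSubgradient

namespace IsSymmetricConvexBody

theorem gauge_lineMap_sq_le (hK : IsSymmetricConvexBody K) (x z : E n) {s : ℝ} (hs : 0 ≤ s)
    (hs' : s ≤ 1) :
    gauge K ((1 - s) • x + s • z) ^ 2 ≤ (1 - s) * gauge K x ^ 2 + s * gauge K z ^ 2 := by
  have hle := hK.gauge_add_le ((1 - s) • x) (s • z)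
  rw [hK.gauge_smul, hK.gauge_smul, abs_of_nonneg (sub_nonneg.2 hs'), abs_of_nonneg hs] at hle
  refine (pow_le_pow_left₀ (gauge_nonneg _) hle 2).trans ?_
  nlinarith [mul_nonneg (mul_nonneg hs (sub_nonneg.2 hs')) (sq_nonneg (gauge K x - gauge K z))]

theorem exists_forall_gauge_sq_add_norm_sub_sq_le (hK : IsSymmetricConvexBody K) (w : E n) :
    ∃ x, ∀ z, gauge K x ^ 2 / 2 + ‖x - w‖ ^ 2 / 2 ≤ gauge K z ^ 2 / 2 + ‖z - w‖ ^ 2 / 2 := by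
  have hgauge := hK.continuous_gauge
  refine Continuous.exists_forall_le (by fun_prop) ?_
  refine Filter.tendsto_atTop_mono (fun z => ?_) (Filter.tendsto_atTop_add_const_right _
    (-(‖w‖ + 1 / 2)) (tendsto_norm_cocompact_atTop (E := E n)))
  nlinarith [norm_sub_norm_le z w, sq_nonneg (gauge K z), sq_nonneg (‖z - w‖ - 1)]

theorem exists_isGaugeSqSubgradient_sub (hK : IsSymmetricConvexBody K) (w : E n) :
    ∃ x, IsGaugeSqSubgradient K (w - x) x := by
  obtain ⟨x, hx⟩ := hK.exists_forall_gauge_sq_add_norm_sub_sq_le w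
  refine ⟨x, fun z => le_of_forall_le_add_mul (m := ‖z - x‖ ^ 2 / 2) fun s hs hs1 => ?_⟩
  have hmin := hx ((1 - s) • x + s • z)
  have hconvex := hK.gauge_lineMap_sq_le x z hs.le hs1
  have hnorm : ‖(1 - s) • x + s • z - w‖ ^ 2 =
      ‖x - w‖ ^ 2 - 2 * s * ⟪w - x, z - x⟫ + s ^ 2 * ‖z - x‖ ^ 2 := by
    have hsub : (1 - s) • x + s • z - w = s • (z - x) - (w - x) := by module
    rw [hsub, norm_sub_sq_real, norm_smul, mul_pow, Real.norm_eq_abs, sq_abs,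
      real_inner_smul_left, real_inner_comm, norm_sub_rev x w]
    ring
  refine le_of_mul_le_mul_left (a := s) ?_ hs
  rw [hnorm] at hmin
  nlinarith

-- `N = 2 P - 1` for the proximal map `P` of the squared gauge; `P` is firmly nonexpansive.
theorem exists_reflected_proximal_map (hK : IsSymmetricConvexBody K) :
    ∃ N : E n → E n, LipschitzWith 1 N ∧ N 0 = 0 ∧
      ∀ w, gauge K ((1 / 2 : ℝ) • (w + N w)) ^ 2 ≤ (‖w‖ ^ 2 - ‖N w‖ ^ 2) / 4 ∧
        gauge (_root_.polarSet K) ((1 / 2 : ℝ) • (w - N w)) ^ 2 ≤ (‖w‖ ^ 2 - ‖N w‖ ^ 2) / 4 := by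
  choose P hP using hK.exists_isGaugeSqSubgradient_sub
  have hinner (w) : (‖w‖ ^ 2 - ‖(2 : ℝ) • P w - w‖ ^ 2) / 4 = gauge K (P w) ^ 2 := by
    rw [← (hP w).inner_eq hK, norm_sub_sq_real, norm_smul, real_inner_smul_left, inner_sub_left,
      mul_pow, real_inner_self_eq_norm_sq, real_inner_comm]
    norm_num
    ring
  refine ⟨fun w => (2 : ℝ) • P w - w, ?_, ?_, fun w => ?_⟩
  · refine LipschitzWith.of_dist_le_mul fun w w' => ?_
    rw [dist_eq_norm, dist_eq_norm, NNReal.coe_one, one_mul]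
    refine le_of_sq_le_sq ?_ (norm_nonneg _)
    have hmono := (hP w).monotone (hP w')
    rw [show w - P w - (w' - P w') = (w - w') - (P w - P w') by module, inner_sub_right,
      real_inner_self_eq_norm_sq] at hmono
    rw [show (2 : ℝ) • P w - w - ((2 : ℝ) • P w' - w') = (2 : ℝ) • (P w - P w') - (w - w') by
      module, norm_sub_sq_real, norm_smul, real_inner_smul_left, mul_pow]
    norm_num
    linarith
  · have hzero := (hP 0).inner_eq hK
    rw [zero_sub, inner_neg_left, real_inner_self_eq_norm_sq] at hzero
    have hnorm : ‖P 0‖ ^ 2 = 0 :=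
      le_antisymm (by linarith [sq_nonneg (gauge K (P 0))]) (sq_nonneg _)
    simpa using hnorm
  · rw [hinner, show (1 / 2 : ℝ) • (w + ((2 : ℝ) • P w - w)) = P w by module,
      show (1 / 2 : ℝ) • (w - ((2 : ℝ) • P w - w)) = w - P w by module]
    exact ⟨le_rfl, pow_le_pow_left₀ (gauge_nonneg _) ((hP w).gauge_polarSet_le hK) 2⟩

end IsSymmetricConvexBody

end Proximal

section HolomorphicFamily

variable {α F : Type*} [MeasurableSpace α] {μ : Measure α} [NormedAddCommGroup F]

theorem aestronglyMeasurable_deriv_of_differentiableAt {𝕜 : Type*} [NontriviallyNormedField 𝕜]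
    [NormedSpace 𝕜 F] {f : 𝕜 → α → F} {z : 𝕜} (hf : ∀ z, AEStronglyMeasurable (f z) μ)
    (hd : ∀ a, DifferentiableAt 𝕜 (f · a) z) :
    AEStronglyMeasurable (fun a => deriv (f · a) z) μ :=
  aestronglyMeasurable_of_tendsto_ae (nhdsWithin 0 {0}ᶜ)
    (fun h => ((hf (z + h)).sub (hf z)).const_smul h⁻¹)
    (.of_forall fun a => hasDerivAt_iff_tendsto_slope_zero.1 (hd a).hasDerivAt)

theorem differentiableOn_integral_of_dominated [NormedSpace ℂ F] {U : Set ℂ} (hU : IsOpen U)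
    {f : ℂ → α → F} {g : α → ℝ} (hf : ∀ z, AEStronglyMeasurable (f z) μ)
    (hd : ∀ a, DifferentiableOn ℂ (f · a) U) (hfg : ∀ z ∈ U, ∀ a, ‖f z a‖ ≤ g a)
    (hg : Integrable g μ) :
    DifferentiableOn ℂ (fun z => ∫ a, f z a ∂μ) U := by
  intro z hz
  obtain ⟨ε, hε, hball⟩ := Metric.isOpen_iff.1 hU z hz
  have hdz : ∀ a, ∀ s ∈ ball z (ε / 2), DifferentiableAt ℂ (f · a) s := fun a s hs =>
    (hd a).differentiableAt (hU.mem_nhds (hball (ball_subset_ball (half_le_self hε.le) hs)))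
  have norm_deriv_le : ∀ a, ∀ s ∈ ball z (ε / 2), ‖deriv (f · a) s‖ ≤ g a / (ε / 2) := by
    intro a s hs
    have hsub : closedBall s (ε / 2) ⊆ U := fun u hu => hball <| by
      rw [mem_ball] at hs ⊢
      linarith [dist_triangle u s z, mem_closedBall.1 hu]
    exact Complex.norm_deriv_le_of_forall_mem_sphere_norm_le (by positivity)
      ((hd a).diffContOnCl_ball hsub) fun u hu => hfg u (hsub (sphere_subset_closedBall hu)) a
  exact (hasDerivAt_integral_of_dominated_loc_of_deriv_le (ball_mem_nhds z (half_pos hε))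
    (.of_forall hf) (hg.mono' (hf z) (.of_forall (hfg z hz)))
    (aestronglyMeasurable_deriv_of_differentiableAt hf
      fun a => hdz a z (mem_ball_self (half_pos hε)))
    (.of_forall norm_deriv_le) (hg.div_const _)
    (.of_forall fun a s hs => (hdz a s hs).hasDerivAt)).2.differentiableAt.differentiableWithinAt

theorem eqOn_const_of_eventually_eq_on_imaginary_axis [NormedSpace ℂ F] [CompleteSpace F]
    {U : Set ℂ} (hU : IsOpen U) (hUc : IsPreconnected U) (h0 : 0 ∈ U) {f : ℂ → F} {c : F}
    (hf : DifferentiableOn ℂ f U) (hfc : ∀ᶠ τ : ℝ in nhds 0, f (Complex.I * τ) = c) :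
    EqOn f (fun _ => c) U := by
  have hlim : Filter.Tendsto (fun τ : ℝ => Complex.I * τ) (nhdsWithin 0 {0}ᶜ)
      (nhdsWithin 0 {0}ᶜ) := by
    refine Filter.Tendsto.inf ?_
      (Filter.tendsto_principal_principal.2 fun τ hτ => by simpa using hτ)
    exact Continuous.tendsto' (by fun_prop) _ _ (by simp)
  exact (hf.analyticOnNhd hU).eqOn_of_preconnected_of_frequently_eq analyticOnNhd_const hUc h0
    (hlim.frequently (hfc.filter_mono nhdsWithin_le_nhds).frequently)

end HolomorphicFamily

section ComplexDet

variable {V : Type*} [NormedAddCommGroup V] [InnerProductSpace ℝ V] [FiniteDimensional ℝ V]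

/-- The matrix of an endomorphism of a Euclidean space in its standard orthonormal basis. -/
def stdMatrix (A : V →L[ℝ] V) :
    Matrix (Fin (Module.finrank ℝ V)) (Fin (Module.finrank ℝ V)) ℝ :=
  LinearMap.toMatrix (stdOrthonormalBasis ℝ V).toBasis (stdOrthonormalBasis ℝ V).toBasis A

theorem stdMatrix_apply (A : V →L[ℝ] V) (i j : Fin (Module.finrank ℝ V)) :
    stdMatrix A i j = ⟪stdOrthonormalBasis ℝ V i, A (stdOrthonormalBasis ℝ V j)⟫ := by
  simp [stdMatrix, LinearMap.toMatrix_apply, OrthonormalBasis.repr_apply_apply]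

theorem abs_stdMatrix_le (A : V →L[ℝ] V) (i j : Fin (Module.finrank ℝ V)) :
    |stdMatrix A i j| ≤ ‖A‖ := by
  rw [stdMatrix_apply]
  refine (abs_real_inner_le_norm _ _).trans ?_
  simpa using A.le_opNorm (stdOrthonormalBasis ℝ V j)

theorem continuous_stdMatrix : Continuous (stdMatrix (V := V)) := by
  refine continuous_matrix fun i j => ?_
  simp_rw [stdMatrix_apply]
  fun_prop

/-- The polynomial function `z ↦ det (1 - z A)` on `ℂ`. -/
def complexDetOneSub (A : V →L[ℝ] V) (z : ℂ) : ℂ :=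
  (1 - z • (stdMatrix A).map Complex.ofReal).det

theorem complexDetOneSub_ofReal (A : V →L[ℝ] V) (u : ℝ) :
    complexDetOneSub A u = (1 - u • A).det := by
  have hmatrix : (1 : Matrix _ _ ℂ) - (u : ℂ) • (stdMatrix A).map Complex.ofReal =
      Complex.ofRealHom.mapMatrix (stdMatrix (1 - u • A)) := by
    ext i j
    simp [stdMatrix, LinearMap.toMatrix_apply, Matrix.one_apply, apply_ite Complex.ofReal]
  rw [complexDetOneSub, hmatrix, ← RingHom.map_det, stdMatrix, LinearMap.det_toMatrix]
  rfl

theorem differentiable_complexDetOneSub (A : V →L[ℝ] V) :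
    Differentiable ℂ (complexDetOneSub A) := by
  unfold complexDetOneSub
  simp_rw [Matrix.det_apply, Matrix.sub_apply, Matrix.smul_apply]
  fun_prop

theorem continuous_complexDetOneSub (z : ℂ) :
    Continuous fun A : V →L[ℝ] V => complexDetOneSub A z :=
  (continuous_const.sub
    ((continuous_stdMatrix.matrix_map Complex.continuous_ofReal).const_smul z)).matrix_det

theorem norm_complexDetOneSub_le {A : V →L[ℝ] V} (hA : ‖A‖ ≤ 1) (z : ℂ) :
    ‖complexDetOneSub A z‖ ≤
      (Module.finrank ℝ V).factorial * (1 + ‖z‖) ^ Module.finrank ℝ V := by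
  have norm_entry_le : ∀ i j,
      ‖(1 - z • (stdMatrix A).map Complex.ofReal : Matrix _ _ ℂ) i j‖ ≤ 1 + ‖z‖ := by
    intro i j
    rw [Matrix.sub_apply, Matrix.smul_apply, Matrix.map_apply, Matrix.one_apply]
    refine (norm_sub_le _ _).trans (add_le_add (by split_ifs <;> simp) ?_)
    rw [norm_smul, Complex.norm_real, Real.norm_eq_abs]
    exact mul_le_of_le_one_right (norm_nonneg z) ((abs_stdMatrix_le A i j).trans hA)
  simpa [complexDetOneSub] using
    Matrix.det_le (abv := IsAbsoluteValue.toAbsoluteValue (norm : ℂ → ℝ)) norm_entry_le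

end ComplexDet

section SkewMap

variable {V : Type*} [NormedAddCommGroup V] [NormedSpace ℝ V]

/-- The map `(a, b) ↦ (a + s N b, b + r N a)`. -/
def skewMap (N : V → V) (s r : ℝ) (w : V × V) : V × V :=
  (w.1 + s • N w.2, w.2 + r • N w.1)

/-- The block map `(a, b) ↦ (a + s B b, b + r C a)`. -/
def blockMap (s r : ℝ) (B C : V →L[ℝ] V) : V × V →L[ℝ] V × V :=
  (ContinuousLinearMap.fst ℝ _ _ + s • B.comp (ContinuousLinearMap.snd ℝ _ _)).prod
    (ContinuousLinearMap.snd ℝ _ _ + r • C.comp (ContinuousLinearMap.fst ℝ _ _))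

theorem det_one_sub_pos [CompleteSpace V] {A : V →L[ℝ] V} (hA : ‖A‖ < 1) : 0 < (1 - A).det := by
  have det_ne_zero : ∀ s ∈ Icc (0 : ℝ) 1, (1 - s • A).det ≠ 0 := fun s hs => by
    have hsA : ‖s • A‖ < 1 := by
      rw [norm_smul, Real.norm_of_nonneg hs.1]
      exact (mul_le_of_le_one_left (norm_nonneg A) hs.2).trans_lt hA
    have hunit := (isUnit_one_sub_of_norm_lt_one hsA).map
      (ContinuousLinearMap.toLinearMapRingHom (R₁ := ℝ) (M₁ := V))
    exact (LinearMap.isUnit_det _ hunit).ne_zero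
  have hcont : Continuous fun s : ℝ => (1 - s • A).det :=
    ContinuousLinearMap.continuous_det.comp (by fun_prop)
  by_contra! hneg
  obtain ⟨s, hs, hdet⟩ := intermediate_value_Icc' zero_le_one hcont.continuousOn
    (show (0 : ℝ) ∈ Icc _ _ from ⟨by simpa using hneg, by simp [ContinuousLinearMap.det]⟩)
  exact det_ne_zero s hs hdet

theorem det_blockMap [FiniteDimensional ℝ V] (s r : ℝ) (B C : V →L[ℝ] V) :
    (blockMap s r B C).det = (1 - (s * r) • B.comp C).det := by
  let e := Module.finBasis ℝ V
  have toMatrix_blockMap :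
      LinearMap.toMatrix (e.prod e) (e.prod e) (blockMap s r B C : _ →ₗ[ℝ] _) =
        Matrix.fromBlocks 1 (s • LinearMap.toMatrix e e B) (r • LinearMap.toMatrix e e C) 1 := by
    ext i j
    rcases i with i | i <;> rcases j with j | j <;>
      simp [LinearMap.toMatrix_apply, blockMap, Matrix.one_apply, Finsupp.single_apply, eq_comm]
  have toMatrix_one_sub : LinearMap.toMatrix e e (1 - (s * r) • B.comp C : V →L[ℝ] V) =
      1 - (s • LinearMap.toMatrix e e B) * (r • LinearMap.toMatrix e e C) := by
    rw [smul_mul_smul_comm, ← LinearMap.toMatrix_comp]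
    ext i j
    simp [LinearMap.toMatrix_apply, Matrix.one_apply, Finsupp.single_apply, eq_comm]
  rw [ContinuousLinearMap.det, ← LinearMap.det_toMatrix (e.prod e), toMatrix_blockMap,
    Matrix.det_fromBlocks_one₂₂, ContinuousLinearMap.det, ← LinearMap.det_toMatrix e,
    toMatrix_one_sub]

variable {N : V → V} {s r : ℝ}

theorem approximatesLinearOn_skewMap (hN : LipschitzWith 1 N) :
    ApproximatesLinearOn (skewMap N s r)
      (ContinuousLinearEquiv.refl ℝ (V × V) : V × V →L[ℝ] V × V) univ (max ‖s‖₊ ‖r‖₊) := by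
  have hfst : LipschitzWith ‖s‖₊ fun w : V × V => s • N w.2 := by
    simpa [Function.comp_def] using (lipschitzWith_smul s).comp (hN.comp LipschitzWith.prod_snd)
  have hsnd : LipschitzWith ‖r‖₊ fun w : V × V => r • N w.1 := by
    simpa [Function.comp_def] using (lipschitzWith_smul r).comp (hN.comp LipschitzWith.prod_fst)
  have hsub : skewMap N s r -
      ⇑(ContinuousLinearEquiv.refl ℝ (V × V) : V × V →L[ℝ] V × V) =
      fun w => (s • N w.2, r • N w.1) := by
    ext w <;> simp [skewMap]
  refine LipschitzOnWith.approximatesLinearOn (lipschitzOnWith_univ.2 ?_)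
  rw [hsub]
  exact hfst.prodMk hsnd

theorem max_nnnorm_lt_inv_nnnorm_refl {E : Type*} [NormedAddCommGroup E] [NormedSpace ℝ E]
    (hs : |s| < 1) (hr : |r| < 1) :
    Subsingleton E ∨ max ‖s‖₊ ‖r‖₊ <
      ‖((ContinuousLinearEquiv.refl ℝ E).symm : E →L[ℝ] E)‖₊⁻¹ := by
  refine (subsingleton_or_nontrivial E).imp_right fun (_ : Nontrivial E) => ?_
  have hone : ‖((ContinuousLinearEquiv.refl ℝ E).symm : E →L[ℝ] E)‖₊ = 1 :=
    NNReal.eq ContinuousLinearMap.norm_id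
  rw [hone, inv_one, max_lt_iff]
  exact ⟨by simpa [← NNReal.coe_lt_coe] using hs, by simpa [← NNReal.coe_lt_coe] using hr⟩

theorem skewMap_injective (hN : LipschitzWith 1 N) (hs : |s| < 1) (hr : |r| < 1) :
    Function.Injective (skewMap N s r) :=
  injOn_univ.1 ((approximatesLinearOn_skewMap hN).injOn (max_nnnorm_lt_inv_nnnorm_refl hs hr))

theorem skewMap_surjective [CompleteSpace V] (hN : LipschitzWith 1 N) (hs : |s| < 1)
    (hr : |r| < 1) : Function.Surjective (skewMap N s r) :=
  (approximatesLinearOn_skewMap hN).surjective (max_nnnorm_lt_inv_nnnorm_refl hs hr)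

/-- The set of pairs of points of differentiability of `N`, where `skewMap N` is differentiable. -/
def diffSet (N : V → V) : Set (V × V) :=
  {a | DifferentiableAt ℝ N a} ×ˢ {a | DifferentiableAt ℝ N a}

theorem hasFDerivAt_skewMap {w : V × V} (hw : w ∈ diffSet N) :
    HasFDerivAt (skewMap N s r) (blockMap s r (fderiv ℝ N w.2) (fderiv ℝ N w.1)) w := by
  have hfst : HasFDerivAt (fun w : V × V => N w.1) _ w :=
    hw.1.hasFDerivAt.comp w hasFDerivAt_fst
  have hsnd : HasFDerivAt (fun w : V × V => N w.2) _ w :=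
    hw.2.hasFDerivAt.comp w hasFDerivAt_snd
  exact (hasFDerivAt_fst.add (hsnd.const_smul s)).prodMk
    (hasFDerivAt_snd.add (hfst.const_smul r))

theorem norm_fderiv_comp_fderiv_le_one (hN : LipschitzWith 1 N) (x y : V) :
    ‖(fderiv ℝ N x).comp (fderiv ℝ N y)‖ ≤ 1 := by
  have norm_fderiv_le_one : ∀ x, ‖fderiv ℝ N x‖ ≤ 1 := fun x => by
    simpa using norm_fderiv_le_of_lipschitz ℝ hN (x₀ := x)
  exact (ContinuousLinearMap.opNorm_comp_le _ _).trans
    (mul_le_one₀ (norm_fderiv_le_one x) (norm_nonneg _) (norm_fderiv_le_one y))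

theorem addHaar_image_eq_zero_of_lipschitzWith [FiniteDimensional ℝ V] [MeasurableSpace V]
    [BorelSpace V] (μ : Measure V) [μ.IsAddHaarMeasure] {f : V → V} {K : ℝ≥0}
    (hf : LipschitzWith K f) {S : Set V} (hS : μ S = 0) : μ (f '' S) = 0 := by
  let ν : Measure V := μH[Module.finrank ℝ V]
  have hνS : ν S = 0 := Measure.absolutelyContinuous_isAddHaarMeasure ν μ hS
  refine Measure.absolutelyContinuous_isAddHaarMeasure μ ν (le_antisymm ?_ zero_le)
  exact (hf.hausdorffMeasure_image_le (Nat.cast_nonneg _) S).trans (by simp [ν, hνS])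

variable [FiniteDimensional ℝ V] [MeasurableSpace V] [BorelSpace V]

theorem measurableSet_diffSet : MeasurableSet (diffSet N) :=
  (measurableSet_of_differentiableAt ℝ N).prod (measurableSet_of_differentiableAt ℝ N)

variable {μ : Measure V} [μ.IsAddHaarMeasure]

theorem ae_mem_diffSet (hN : LipschitzWith 1 N) : ∀ᵐ w ∂μ.prod μ, w ∈ diffSet N := by
  have hnull : μ {a | DifferentiableAt ℝ N a}ᶜ = 0 := hN.ae_differentiableAt
  change μ.prod μ (diffSet N)ᶜ = 0
  rw [diffSet, compl_prod_eq_union]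
  refine measure_union_null ?_ ?_ <;> simp [Measure.prod_prod, hnull]

theorem ae_mem_image_diffSet (hN : LipschitzWith 1 N) (hs : |s| < 1) (hr : |r| < 1) :
    ∀ᵐ w ∂μ.prod μ, w ∈ skewMap N s r '' diffSet N := by
  have hlip := lipschitzOnWith_univ.1
    (lipschitzOnWith_iff_restrict.2 (approximatesLinearOn_skewMap (s := s) (r := r) hN).lipschitz)
  refine measure_mono_null (fun w hw => ?_)
    (addHaar_image_eq_zero_of_lipschitzWith (μ.prod μ) hlip (ae_mem_diffSet hN))
  obtain ⟨v, rfl⟩ := skewMap_surjective hN hs hr w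
  exact ⟨v, fun hv => hw ⟨v, hv, rfl⟩, rfl⟩

theorem lintegral_eq_lintegral_abs_det_mul_skewMap (hN : LipschitzWith 1 N) (hs : |s| < 1)
    (hr : |r| < 1) (G : V × V → ℝ≥0∞) :
    ∫⁻ w, G w ∂μ.prod μ =
      ∫⁻ w, ENNReal.ofReal |(blockMap s r (fderiv ℝ N w.2) (fderiv ℝ N w.1)).det| *
        G (skewMap N s r w) ∂μ.prod μ := by
  have hchange := lintegral_image_eq_lintegral_abs_det_fderiv_mul (μ.prod μ)
    measurableSet_diffSet (fun w hw => (hasFDerivAt_skewMap hw).hasFDerivWithinAt)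
    (skewMap_injective hN hs hr).injOn G
  rwa [Measure.restrict_eq_self_of_ae_mem (ae_mem_image_diffSet hN hs hr),
    Measure.restrict_eq_self_of_ae_mem (ae_mem_diffSet hN)] at hchange

theorem integral_eq_integral_abs_det_smul_skewMap {F : Type*} [NormedAddCommGroup F]
    [NormedSpace ℝ F] (hN : LipschitzWith 1 N) (hs : |s| < 1) (hr : |r| < 1) (G : V × V → F) :
    ∫ w, G w ∂μ.prod μ =
      ∫ w, |(blockMap s r (fderiv ℝ N w.2) (fderiv ℝ N w.1)).det| •
        G (skewMap N s r w) ∂μ.prod μ := by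
  have hchange := integral_image_eq_integral_abs_det_fderiv_smul (μ := μ.prod μ)
    measurableSet_diffSet (fun w hw => (hasFDerivAt_skewMap hw).hasFDerivWithinAt)
    (skewMap_injective hN hs hr).injOn G
  rwa [Measure.restrict_eq_self_of_ae_mem (ae_mem_image_diffSet hN hs hr),
    Measure.restrict_eq_self_of_ae_mem (ae_mem_diffSet hN)] at hchange

end SkewMap

section TwistedGaussian

variable {V : Type*} [NormedAddCommGroup V] [InnerProductSpace ℝ V] {N : V → V}

/-- The entire function of `t` whose value at `t = iτ` is `-‖(a + τ N b, b - τ N a)‖² / 4`, where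
`w = (a, b)`. -/
def twistedExponent (N : V → V) (t : ℂ) (w : V × V) : ℂ :=
  -((‖w.1‖ ^ 2 + ‖w.2‖ ^ 2) / 4 : ℝ) + t ^ 2 * ((‖N w.1‖ ^ 2 + ‖N w.2‖ ^ 2) / 4 : ℝ) +
    Complex.I * t * ((⟪w.1, N w.2⟫ - ⟪N w.1, w.2⟫) / 2 : ℝ)

theorem twistedExponent_re (t : ℂ) (w : V × V) :
    (twistedExponent N t w).re = -((‖w.1‖ ^ 2 + ‖w.2‖ ^ 2) / 4) +
      (t.re ^ 2 - t.im ^ 2) * ((‖N w.1‖ ^ 2 + ‖N w.2‖ ^ 2) / 4) -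
      t.im * ((⟪w.1, N w.2⟫ - ⟪N w.1, w.2⟫) / 2) := by
  rw [twistedExponent, Complex.add_re, Complex.add_re, Complex.re_mul_ofReal,
    Complex.re_mul_ofReal, Complex.neg_re, Complex.ofReal_re, sq t, Complex.mul_re,
    Complex.I_mul_re]
  ring

theorem twistedExponent_I_mul (τ : ℝ) (w : V × V) :
    twistedExponent N (Complex.I * τ) w =
      (-((‖(skewMap N τ (-τ) w).1‖ ^ 2 + ‖(skewMap N τ (-τ) w).2‖ ^ 2) / 4) : ℝ) := by
  have I_mul_sq : (Complex.I * (τ : ℂ)) ^ 2 = ((-τ ^ 2 : ℝ) : ℂ) := by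
    rw [mul_pow, Complex.I_sq]; push_cast; ring
  have I_mul_I_mul : Complex.I * (Complex.I * (τ : ℂ)) = ((-τ : ℝ) : ℂ) := by
    rw [← mul_assoc, Complex.I_mul_I]; push_cast; ring
  rw [twistedExponent, I_mul_sq, I_mul_I_mul, ← Complex.ofReal_mul, ← Complex.ofReal_mul,
    ← Complex.ofReal_neg, ← Complex.ofReal_add, ← Complex.ofReal_add]
  simp only [skewMap, norm_add_sq_real, norm_smul, mul_pow, Real.norm_eq_abs, sq_abs,
    real_inner_smul_right, real_inner_comm (N w.1)]
  ring_nf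

theorem twistedExponent_re_le (hN : ∀ x, ‖N x‖ ≤ ‖x‖) {r δ : ℝ} {t : ℂ} (htr : |t.re| ≤ r)
    (hti : |t.im| ≤ δ) (w : V × V) :
    (twistedExponent N t w).re ≤ -((1 - r ^ 2 - 2 * δ) / 4) * (‖w.1‖ ^ 2 + ‖w.2‖ ^ 2) := by
  have inner_sub_inner_le : |⟪w.1, N w.2⟫ - ⟪N w.1, w.2⟫| ≤ ‖w.1‖ ^ 2 + ‖w.2‖ ^ 2 :=
    calc |⟪w.1, N w.2⟫ - ⟪N w.1, w.2⟫| ≤ |⟪w.1, N w.2⟫| + |⟪N w.1, w.2⟫| := abs_sub _ _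
      _ ≤ ‖w.1‖ * ‖N w.2‖ + ‖N w.1‖ * ‖w.2‖ :=
          add_le_add (abs_real_inner_le_norm _ _) (abs_real_inner_le_norm _ _)
      _ ≤ ‖w.1‖ * ‖w.2‖ + ‖w.1‖ * ‖w.2‖ := by gcongr <;> exact hN _
      _ ≤ ‖w.1‖ ^ 2 + ‖w.2‖ ^ 2 := by nlinarith [sq_nonneg (‖w.1‖ - ‖w.2‖)]
  have hδ : 0 ≤ δ := (abs_nonneg _).trans hti
  have hcross : -(t.im * ((⟪w.1, N w.2⟫ - ⟪N w.1, w.2⟫) / 2)) ≤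
      δ * ((‖w.1‖ ^ 2 + ‖w.2‖ ^ 2) / 2) := by
    refine (neg_le_abs _).trans ?_
    rw [abs_mul, abs_div, abs_two]
    gcongr
  have hsquare : (t.re ^ 2 - t.im ^ 2) * ((‖N w.1‖ ^ 2 + ‖N w.2‖ ^ 2) / 4) ≤
      r ^ 2 * ((‖w.1‖ ^ 2 + ‖w.2‖ ^ 2) / 4) := by
    have hre : t.re ^ 2 ≤ r ^ 2 := sq_le_sq' (abs_le.1 htr).1 (abs_le.1 htr).2
    calc _ ≤ r ^ 2 * ((‖N w.1‖ ^ 2 + ‖N w.2‖ ^ 2) / 4) := by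
          gcongr; linarith [sq_nonneg t.im]
      _ ≤ _ := by gcongr <;> exact hN _
  rw [twistedExponent_re]
  linarith

variable [FiniteDimensional ℝ V]

/-- The entire function of `t` whose value at `t = iτ` is the pullback of the Gaussian
`exp (-‖·‖² / 4)` under `skewMap N τ (-τ)`, Jacobian included. -/
def twistedGaussian (N : V → V) (t : ℂ) (w : V × V) : ℂ :=
  Complex.exp (twistedExponent N t w) *
    complexDetOneSub ((fderiv ℝ N w.2).comp (fderiv ℝ N w.1)) (t ^ 2)

theorem differentiable_twistedGaussian (w : V × V) :
    Differentiable ℂ fun t => twistedGaussian N t w := by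
  unfold twistedGaussian twistedExponent
  exact Differentiable.mul (by fun_prop)
    ((differentiable_complexDetOneSub _).comp (differentiable_id.pow 2))

theorem norm_twistedGaussian_ofReal (t : ℝ) (w : V × V) :
    ‖twistedGaussian N t w‖ = Real.exp (-((‖w.1‖ ^ 2 + ‖w.2‖ ^ 2) / 4) +
      t ^ 2 * ((‖N w.1‖ ^ 2 + ‖N w.2‖ ^ 2) / 4)) *
      |(blockMap t t (fderiv ℝ N w.2) (fderiv ℝ N w.1)).det| := by
  rw [twistedGaussian, norm_mul, Complex.norm_exp, twistedExponent_re, ← Complex.ofReal_pow,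
    complexDetOneSub_ofReal, det_blockMap, Complex.norm_real, ← sq, Real.norm_eq_abs]
  simp

theorem norm_twistedGaussian_le (hN : LipschitzWith 1 N) (hN0 : N 0 = 0) {r δ : ℝ} (hr : r ≤ 1)
    (hδ : δ ≤ 1) {t : ℂ} (htr : |t.re| ≤ r) (hti : |t.im| ≤ δ) (w : V × V) :
    ‖twistedGaussian N t w‖ ≤
      ((Module.finrank ℝ V).factorial * 3 ^ Module.finrank ℝ V) *
        (Real.exp (-((1 - r ^ 2 - 2 * δ) / 4) * ‖w.1‖ ^ 2) *
          Real.exp (-((1 - r ^ 2 - 2 * δ) / 4) * ‖w.2‖ ^ 2)) := by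
  have norm_map_le : ∀ x, ‖N x‖ ≤ ‖x‖ := fun x => by
    simpa [hN0] using hN.norm_sub_le x 0
  have norm_sq_le : ‖t ^ 2‖ ≤ 2 := by
    rw [norm_pow, Complex.sq_norm, Complex.normSq_apply]
    nlinarith [abs_le.1 (htr.trans hr), abs_le.1 (hti.trans hδ)]
  rw [twistedGaussian, norm_mul, mul_comm, Complex.norm_exp, ← Real.exp_add, ← mul_add]
  gcongr
  · refine (norm_complexDetOneSub_le (norm_fderiv_comp_fderiv_le_one hN _ _) _).trans ?_
    gcongr
    linarith
  · exact twistedExponent_re_le norm_map_le htr hti w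

variable [MeasurableSpace V] [BorelSpace V]

theorem measurable_twistedGaussian (hN : Continuous N) (t : ℂ) :
    Measurable (twistedGaussian N t) := by
  have hexp : Continuous fun w => Complex.exp (twistedExponent N t w) := by
    unfold twistedExponent
    fun_prop
  have hfderiv : Measurable fun w : V × V => (fderiv ℝ N w.2).comp (fderiv ℝ N w.1) :=
    (continuous_fst.clm_comp continuous_snd).measurable.comp
      (((measurable_fderiv ℝ N).comp measurable_snd).prodMk
        ((measurable_fderiv ℝ N).comp measurable_fst))
  exact hexp.measurable.mul ((continuous_complexDetOneSub (t ^ 2)).measurable.comp hfderiv)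

theorem integrable_rexp_neg_mul_sq_norm {b : ℝ} (hb : 0 < b) :
    Integrable fun v : V => Real.exp (-b * ‖v‖ ^ 2) :=
  .of_integral_ne_zero <| by
    rw [GaussianFourier.integral_rexp_neg_mul_sq_norm hb]
    positivity

theorem integral_gaussian_prod :
    ∫ w : V × V, Real.exp (-((‖w.1‖ ^ 2 + ‖w.2‖ ^ 2) / 4)) =
      (4 * Real.pi) ^ Module.finrank ℝ V := by
  have exp_split : ∀ w : V × V, Real.exp (-((‖w.1‖ ^ 2 + ‖w.2‖ ^ 2) / 4)) =
      Real.exp (-(1 / 4) * ‖w.1‖ ^ 2) * Real.exp (-(1 / 4) * ‖w.2‖ ^ 2) := fun w => by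
    rw [← Real.exp_add]
    ring_nf
  simp_rw [exp_split]
  rw [Measure.volume_eq_prod, integral_prod_mul (fun x : V => Real.exp (-(1 / 4) * ‖x‖ ^ 2))
    (fun x : V => Real.exp (-(1 / 4) * ‖x‖ ^ 2)),
    GaussianFourier.integral_rexp_neg_mul_sq_norm (by norm_num),
    ← Real.rpow_add (by positivity), add_halves, Real.rpow_natCast]
  congr 1
  ring

theorem integral_twistedGaussian_I_mul (hN : LipschitzWith 1 N) {τ : ℝ} (hτ : |τ| < 1) :
    ∫ w, twistedGaussian N (Complex.I * τ) w = ((4 * Real.pi) ^ Module.finrank ℝ V : ℝ) := by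
  rw [← integral_gaussian_prod, ← integral_complex_ofReal, Measure.volume_eq_prod]
  refine Eq.trans ?_
    (integral_eq_integral_abs_det_smul_skewMap hN hτ (by rwa [abs_neg] : |-τ| < 1) _).symm
  refine integral_congr_ae (.of_forall fun w => ?_)
  have det_pos : 0 < (1 - (-τ ^ 2) • (fderiv ℝ N w.2).comp (fderiv ℝ N w.1)).det := by
    refine det_one_sub_pos ?_
    rw [norm_smul, norm_neg, norm_pow, Real.norm_eq_abs]
    exact (mul_le_of_le_one_right (by positivity) (norm_fderiv_comp_fderiv_le_one hN _ _)).trans_lt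
      (pow_lt_one₀ (abs_nonneg _) hτ two_ne_zero)
  have I_mul_sq : (Complex.I * (τ : ℂ)) ^ 2 = ((-τ ^ 2 : ℝ) : ℂ) := by
    rw [mul_pow, Complex.I_sq]; push_cast; ring
  simp only [twistedGaussian]
  rw [twistedExponent_I_mul, I_mul_sq, complexDetOneSub_ofReal, det_blockMap, mul_neg, ← sq,
    abs_of_pos det_pos, ← Complex.ofReal_exp, Complex.real_smul, mul_comm]

theorem integral_twistedGaussian_ofReal (hN : LipschitzWith 1 N) (hN0 : N 0 = 0) {t : ℝ}
    (ht0 : 0 ≤ t) (ht : t < 1) :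
    ∫ w, twistedGaussian N t w = ((4 * Real.pi) ^ Module.finrank ℝ V : ℝ) := by
  obtain ⟨r, htr, hr⟩ := exists_between ht
  have hr0 : 0 < r := ht0.trans_lt htr
  have hr2 : r ^ 2 < 1 := pow_lt_one₀ hr0.le hr two_ne_zero
  obtain ⟨δ, hδ0, hδ⟩ := exists_between (show 0 < (1 - r ^ 2) / 2 by linarith)
  have hκ : 0 < (1 - r ^ 2 - 2 * δ) / 4 := by linarith
  let U : Set ℂ := Ioo (-r) r ×ℂ Ioo (-δ) δ
  have hU : IsOpen U := isOpen_Ioo.reProdIm isOpen_Ioo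
  have hUc : Convex ℝ U := ((convex_Ioo _ _).linear_preimage Complex.reLm).inter
    ((convex_Ioo _ _).linear_preimage Complex.imLm)
  have hdiff : DifferentiableOn ℂ (fun z => ∫ w, twistedGaussian N z w) U :=
    differentiableOn_integral_of_dominated hU
      (fun z => (measurable_twistedGaussian hN.continuous z).aestronglyMeasurable)
      (fun w => (differentiable_twistedGaussian w).differentiableOn)
      (fun z hz => norm_twistedGaussian_le hN hN0 hr.le (by nlinarith)
        (abs_le.2 ⟨hz.1.1.le, hz.1.2.le⟩) (abs_le.2 ⟨hz.2.1.le, hz.2.2.le⟩))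
      ((Integrable.mul_prod (integrable_rexp_neg_mul_sq_norm hκ)
        (integrable_rexp_neg_mul_sq_norm hκ)).const_mul _)
  have himaginary : ∀ᶠ τ : ℝ in nhds 0, ∫ w, twistedGaussian N (Complex.I * τ) w =
      ((4 * Real.pi) ^ Module.finrank ℝ V : ℝ) := by
    filter_upwards [ball_mem_nhds (0 : ℝ) one_pos] with τ hτ
    exact integral_twistedGaussian_I_mul hN (by simpa using hτ)
  refine eqOn_const_of_eventually_eq_on_imaginary_axis hU hUc.isPreconnected ?_ hdiff himaginary
    (x := (t : ℂ)) ?_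
  · exact ⟨by simpa using hr0, by simpa using hδ0⟩
  · exact ⟨by simpa using ⟨by linarith, htr⟩, by simpa using hδ0⟩

theorem four_mul_pi_pow_le_lintegral (hN : LipschitzWith 1 N) (hN0 : N 0 = 0) {t : ℝ}
    (ht0 : 0 ≤ t) (ht : t < 1) {G : V × V → ℝ≥0∞}
    (hG : ∀ w : V × V, ENNReal.ofReal (Real.exp (-((‖w.1‖ ^ 2 + ‖w.2‖ ^ 2) / 4) +
      t ^ 2 * ((‖N w.1‖ ^ 2 + ‖N w.2‖ ^ 2) / 4))) ≤ G (skewMap N t t w)) :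
    ENNReal.ofReal ((4 * Real.pi) ^ Module.finrank ℝ V) ≤ ∫⁻ w, G w := by
  have htabs : |t| < 1 := by rwa [abs_of_nonneg ht0]
  calc ENNReal.ofReal ((4 * Real.pi) ^ Module.finrank ℝ V)
      = ‖∫ w, twistedGaussian N t w‖ₑ := by
        rw [integral_twistedGaussian_ofReal hN hN0 ht0 ht, ← ofReal_norm, Complex.norm_real,
          Real.norm_of_nonneg (by positivity)]
    _ ≤ ∫⁻ w, ‖twistedGaussian N t w‖ₑ := enorm_integral_le_lintegral_enorm _
    _ ≤ ∫⁻ w, ENNReal.ofReal |(blockMap t t (fderiv ℝ N w.2) (fderiv ℝ N w.1)).det| *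
          G (skewMap N t t w) := by
        refine lintegral_mono fun w => ?_
        rw [← ofReal_norm, norm_twistedGaussian_ofReal, mul_comm,
          ENNReal.ofReal_mul (abs_nonneg _)]
        gcongr
        exact hG w
    _ = ∫⁻ w, G w := by
        rw [Measure.volume_eq_prod, ← lintegral_eq_lintegral_abs_det_mul_skewMap hN htabs htabs]

end TwistedGaussian

section BourgainMilman

theorem lintegral_half_add_mul_half_sub {V : Type*} [NormedAddCommGroup V] [InnerProductSpace ℝ V]
    [FiniteDimensional ℝ V] [MeasurableSpace V] [BorelSpace V] {f g : V → ℝ≥0∞}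
    (hf : Measurable f) (hg : Measurable g) :
    ∫⁻ w : V × V, f ((1 / 2 : ℝ) • (w.1 + w.2)) * g ((1 / 2 : ℝ) • (w.1 - w.2)) =
      2 ^ Module.finrank ℝ V * ((∫⁻ x, f x) * ∫⁻ y, g y) := by
  have lintegral_half_smul : ∀ h : V → ℝ≥0∞, Measurable h →
      ∫⁻ a, h ((1 / 2 : ℝ) • a) = 2 ^ Module.finrank ℝ V * ∫⁻ x, h x := fun h hh => by
    rw [← lintegral_map hh (measurable_const_smul (1 / 2 : ℝ)),
      Measure.map_addHaar_smul _ (by norm_num), lintegral_smul_measure, smul_eq_mul,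
      one_div, inv_pow, inv_inv, abs_of_pos (by positivity), ENNReal.ofReal_pow (by norm_num)]
    simp
  have inner_integral : ∀ b : V,
      ∫⁻ a, f ((1 / 2 : ℝ) • (a + b)) * g ((1 / 2 : ℝ) • (a - b)) =
        2 ^ Module.finrank ℝ V * ∫⁻ x, f x * g (x - b) := by
    intro b
    have hsplit : ∀ a, (1 / 2 : ℝ) • (a - b) = (1 / 2 : ℝ) • (a + b) - b := fun a => by module
    simp_rw [hsplit]
    rw [lintegral_add_right_eq_self
      (fun a => f ((1 / 2 : ℝ) • a) * g ((1 / 2 : ℝ) • a - b)) b]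
    exact lintegral_half_smul (fun x => f x * g (x - b)) (by fun_prop)
  have hmeas : Measurable fun w : V × V => f w.2 * g (w.2 - w.1) := by fun_prop
  rw [Measure.volume_eq_prod, lintegral_prod_symm _ (by fun_prop)]
  simp_rw [inner_integral]
  rw [lintegral_const_mul _ hmeas.lintegral_prod_right',
    lintegral_lintegral_swap hmeas.aemeasurable, ← lintegral_mul_const _ hf]
  congr 2 with x
  dsimp only
  rw [lintegral_const_mul _ (by fun_prop), lintegral_sub_left_eq_self]

namespace IsSymmetricConvexBody

variable {n : ℕ} {K L : Set (E n)}

theorem exists_gauge_le_mul_gauge (hK : IsSymmetricConvexBody K) (hL : IsSymmetricConvexBody L) :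
    ∃ R > 0, ∀ x, gauge K x ≤ R * gauge L x := by
  obtain ⟨R₁, hR₁, hKR₁⟩ := hK.exists_gauge_le
  obtain ⟨R₂, hR₂, hLR₂⟩ := hL.exists_norm_le
  refine ⟨R₁ * R₂, mul_pos hR₁ hR₂, fun x => (hKR₁ x).trans ?_⟩
  rw [mul_assoc]
  exact mul_le_mul_of_nonneg_left (hLR₂ x) hR₁.le

theorem gauge_skew_combination_le (hK : IsSymmetricConvexBody K) {R t s₁ s₂ : ℝ}
    {x₁ x₂ y₁ y₂ : E n} (ht0 : 0 ≤ t) (ht1 : t ≤ 1) (htR : (1 - t) * R ≤ 2)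
    (hx₁ : gauge K x₁ ≤ s₁) (hx₂ : gauge K x₂ ≤ s₂) (hy₁ : gauge K y₁ ≤ R * s₁)
    (hy₂ : gauge K y₂ ≤ R * s₂) :
    gauge K (((1 + t) / 2) • (x₁ + x₂) + ((1 - t) / 2) • (y₁ + y₂)) ≤ 2 * (s₁ + s₂) := by
  have hs : 0 ≤ s₁ + s₂ := add_nonneg ((gauge_nonneg _).trans hx₁) ((gauge_nonneg _).trans hx₂)
  calc gauge K (((1 + t) / 2) • (x₁ + x₂) + ((1 - t) / 2) • (y₁ + y₂))
      ≤ (1 + t) / 2 * gauge K (x₁ + x₂) + (1 - t) / 2 * gauge K (y₁ + y₂) := by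
        refine (hK.gauge_add_le _ _).trans_eq ?_
        rw [hK.gauge_smul, hK.gauge_smul, abs_of_nonneg (by linarith), abs_of_nonneg (by linarith)]
    _ ≤ 1 * (s₁ + s₂) + (1 - t) / 2 * (R * s₁ + R * s₂) := by
        gcongr
        · exact gauge_nonneg _
        · linarith
        · exact (hK.gauge_add_le _ _).trans (add_le_add hx₁ hx₂)
        · exact (hK.gauge_add_le _ _).trans (add_le_add hy₁ hy₂)
    _ ≤ 2 * (s₁ + s₂) := by nlinarith [mul_le_mul_of_nonneg_right htR hs]

theorem exists_gauge_skewMap_sq_le (hK : IsSymmetricConvexBody K) {N : E n → E n}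
    (hN : ∀ w, gauge K ((1 / 2 : ℝ) • (w + N w)) ^ 2 ≤ (‖w‖ ^ 2 - ‖N w‖ ^ 2) / 4 ∧
      gauge (_root_.polarSet K) ((1 / 2 : ℝ) • (w - N w)) ^ 2 ≤ (‖w‖ ^ 2 - ‖N w‖ ^ 2) / 4) :
    ∃ t, 0 ≤ t ∧ t < 1 ∧ ∀ w : E n × E n,
      gauge K ((1 / 2 : ℝ) • ((skewMap N t t w).1 + (skewMap N t t w).2)) ^ 2 ≤
        2 * (‖w.1‖ ^ 2 - ‖N w.1‖ ^ 2 + (‖w.2‖ ^ 2 - ‖N w.2‖ ^ 2)) ∧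
      gauge (_root_.polarSet K) ((1 / 2 : ℝ) • ((skewMap N t t w).1 - (skewMap N t t w).2)) ^ 2 ≤
        2 * (‖w.1‖ ^ 2 - ‖N w.1‖ ^ 2 + (‖w.2‖ ^ 2 - ‖N w.2‖ ^ 2)) := by
  have hP := hK.polarSet
  obtain ⟨R₁, hR₁, hKP⟩ := hK.exists_gauge_le_mul_gauge hP
  obtain ⟨R₂, hR₂, hPK⟩ := hP.exists_gauge_le_mul_gauge hK
  let t := (R₁ + R₂) / (R₁ + R₂ + 1)
  have ht1 : t < 1 := by rw [div_lt_one (by positivity)]; linarith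
  have htR : (1 - t) * (R₁ + R₂) = t := by simp only [t]; field_simp; ring
  have htR₁ : (1 - t) * R₁ ≤ 2 := by nlinarith
  have htR₂ : (1 - t) * R₂ ≤ 2 := by nlinarith
  have ht0 : 0 ≤ t := by positivity
  refine ⟨t, ht0, ht1, fun ⟨a, b⟩ => ?_⟩
  obtain ⟨haK, haP⟩ := hN a
  obtain ⟨hbK, hbP⟩ := hN b
  set q₁ := (‖a‖ ^ 2 - ‖N a‖ ^ 2) / 4
  set q₂ := (‖b‖ ^ 2 - ‖N b‖ ^ 2) / 4
  have sum_sqrt_sq_le : (2 * (√q₁ + √q₂)) ^ 2 ≤ 8 * (q₁ + q₂) := by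
    rw [mul_pow]
    linarith [add_sq_le (a := √q₁) (b := √q₂), Real.sq_sqrt ((sq_nonneg _).trans haK),
      Real.sq_sqrt ((sq_nonneg _).trans hbK)]
  have bound_eq : 2 * (‖a‖ ^ 2 - ‖N a‖ ^ 2 + (‖b‖ ^ 2 - ‖N b‖ ^ 2)) = 8 * (q₁ + q₂) := by ring
  replace haK := Real.le_sqrt_of_sq_le haK
  replace haP := Real.le_sqrt_of_sq_le haP
  replace hbK := Real.le_sqrt_of_sq_le hbK
  replace hbP := Real.le_sqrt_of_sq_le hbP
  rw [bound_eq]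
  refine ⟨(pow_le_pow_left₀ (gauge_nonneg _) ?_ 2).trans sum_sqrt_sq_le,
    (pow_le_pow_left₀ (gauge_nonneg _) ?_ 2).trans sum_sqrt_sq_le⟩
  · have half_add_eq : (1 / 2 : ℝ) • (a + t • N b + (b + t • N a)) =
        ((1 + t) / 2) • ((1 / 2 : ℝ) • (a + N a) + (1 / 2 : ℝ) • (b + N b)) +
          ((1 - t) / 2) • ((1 / 2 : ℝ) • (a - N a) + (1 / 2 : ℝ) • (b - N b)) := by module
    rw [skewMap, half_add_eq]
    exact hK.gauge_skew_combination_le ht0 ht1.le htR₁ haK hbK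
      ((hKP _).trans (by gcongr)) ((hKP _).trans (by gcongr))
  · have half_sub_eq : (1 / 2 : ℝ) • (a + t • N b - (b + t • N a)) =
        ((1 + t) / 2) • ((1 / 2 : ℝ) • (a - N a) + -((1 / 2 : ℝ) • (b - N b))) +
          ((1 - t) / 2) • ((1 / 2 : ℝ) • (a + N a) + -((1 / 2 : ℝ) • (b + N b))) := by module
    rw [skewMap, half_sub_eq]
    exact hP.gauge_skew_combination_le ht0 ht1.le htR₂ haP ((hP.gauge_neg _).trans_le hbP)
      ((hPK _).trans (by gcongr)) ((hPK _).trans (by rw [hK.gauge_neg]; gcongr))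

theorem four_mul_pi_pow_le_volume_mul_volume_polarSet (hK : IsSymmetricConvexBody K) :
    (4 * Real.pi) ^ n ≤ 2 ^ n * ((4 ^ n * Real.Gamma (n / 2 + 1) * volume.real K) *
      (4 ^ n * Real.Gamma (n / 2 + 1) * volume.real (_root_.polarSet K))) := by
  obtain ⟨N, hN, hN0, hNgauge⟩ := hK.exists_reflected_proximal_map
  obtain ⟨t, ht0, ht1, hskew⟩ := hK.exists_gauge_skewMap_sq_le hNgauge
  let f : E n → ℝ≥0∞ := fun x => .ofReal (Real.exp (-(gauge K x / 4) ^ 2))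
  let g : E n → ℝ≥0∞ := fun x => .ofReal (Real.exp (-(gauge (_root_.polarSet K) x / 4) ^ 2))
  have hf : Measurable f := by
    have := hK.continuous_gauge
    fun_prop
  have hg : Measurable g := by
    have := hK.polarSet.continuous_gauge
    fun_prop
  have gaussian_le := four_mul_pi_pow_le_lintegral hN hN0 ht0 ht1
    (G := fun w => f ((1 / 2 : ℝ) • (w.1 + w.2)) * g ((1 / 2 : ℝ) • (w.1 - w.2))) fun w => by
      rw [← ENNReal.ofReal_mul (Real.exp_nonneg _), ← Real.exp_add]
      refine ENNReal.ofReal_le_ofReal (Real.exp_le_exp.2 ?_)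
      have : t ^ 2 * ((‖N w.1‖ ^ 2 + ‖N w.2‖ ^ 2) / 4) ≤ 1 * ((‖N w.1‖ ^ 2 + ‖N w.2‖ ^ 2) / 4) := by
        gcongr
        exact pow_le_one₀ ht0 ht1.le
      rw [div_pow, div_pow]
      linarith [(hskew w).1, (hskew w).2]
  have hΓ : 0 < Real.Gamma (n / 2 + 1) := Real.Gamma_pos_of_pos (by positivity)
  have two_pow : (2 : ℝ≥0∞) ^ n = ENNReal.ofReal (2 ^ n) := by
    rw [ENNReal.ofReal_pow two_pos.le, ENNReal.ofReal_ofNat]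
  rw [lintegral_half_add_mul_half_sub hf hg, hK.lintegral_exp_neg_gauge_div_sq (by norm_num),
    hK.polarSet.lintegral_exp_neg_gauge_div_sq (by norm_num),
    finrank_euclideanSpace, Fintype.card_fin, ← ENNReal.ofReal_mul (by positivity), two_pow,
    ← ENNReal.ofReal_mul (by positivity), ENNReal.ofReal_le_ofReal_iff (by positivity)]
    at gaussian_le
  exact gaussian_le

end IsSymmetricConvexBody

theorem Gamma_half_add_one_sq_le (n : ℕ) : Real.Gamma (n / 2 + 1) ^ 2 ≤ (n : ℝ) ^ n := by
  have logConvex := Real.Gamma_mul_add_mul_le_rpow_Gamma_mul_rpow_Gamma (s := (n : ℝ) + 1)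
    (t := 1) (a := 1 / 2) (b := 1 / 2) (by positivity) one_pos (by norm_num) (by norm_num)
    (by norm_num)
  rw [Real.Gamma_one, Real.one_rpow, mul_one, mul_one, Real.Gamma_nat_eq_factorial,
    ← Real.sqrt_eq_rpow, show 1 / 2 * ((n : ℝ) + 1) + 1 / 2 = n / 2 + 1 by ring] at logConvex
  have : 0 ≤ Real.Gamma (n / 2 + 1) := (Real.Gamma_pos_of_pos (by positivity)).le
  calc Real.Gamma (n / 2 + 1) ^ 2 ≤ √(n.factorial : ℝ) ^ 2 := by gcongr
    _ = (n.factorial : ℝ) := Real.sq_sqrt (by positivity)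
    _ ≤ (n : ℝ) ^ n := by exact_mod_cast n.factorial_le_pow

theorem IsSymmetricConvexBody.pow_le_volume_mul_volume_polarSet {n : ℕ} (hn : 0 < n)
    {K : Set (E n)} (hK : IsSymmetricConvexBody K) :
    (1 / (4 * n) : ℝ) ^ n ≤ volume.real K * volume.real (_root_.polarSet K) := by
  have : (0 : ℝ) < n := by exact_mod_cast hn
  have pi_bound : (8 : ℝ) ^ n ≤ (4 * Real.pi) ^ n := by
    gcongr
    linarith [Real.pi_gt_three]
  have : (8 : ℝ) ^ n * 1 ≤
      8 ^ n * ((4 * n) ^ n * (volume.real K * volume.real (_root_.polarSet K))) := by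
    calc (8 : ℝ) ^ n * 1
        ≤ (2 ^ n * 4 ^ n * 4 ^ n) * (Real.Gamma (n / 2 + 1) ^ 2 *
            (volume.real K * volume.real (_root_.polarSet K))) := by
          refine (mul_one _).trans_le ((pi_bound.trans
            hK.four_mul_pi_pow_le_volume_mul_volume_polarSet).trans_eq ?_)
          ring
      _ ≤ (2 ^ n * 4 ^ n * 4 ^ n) * ((n : ℝ) ^ n *
            (volume.real K * volume.real (_root_.polarSet K))) := by
          gcongr
          exact Gamma_half_add_one_sq_le n
      _ = 8 ^ n * ((4 * n) ^ n * (volume.real K * volume.real (_root_.polarSet K))) := by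
          rw [mul_pow 4, show (8 : ℝ) ^ n = 2 ^ n * 4 ^ n by rw [← mul_pow]; norm_num]
          ring
  rw [one_div, inv_pow, inv_le_iff_one_le_mul₀' (by positivity)]
  exact le_of_mul_le_mul_left this (by positivity)

end BourgainMilman

section MomentMatrix

variable {V : Type*} [NormedAddCommGroup V] [InnerProductSpace ℝ V]

/-- The solid ellipsoid on which the quadratic form of `A` is at most `s`. -/
def ellipsoid (A : V →L[ℝ] V) (s : ℝ) : Set V := {y | ⟪A y, y⟫ ≤ s}

variable {A : V →L[ℝ] V} {s : ℝ}

theorem isClosed_ellipsoid : IsClosed (ellipsoid A s) :=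
  isClosed_le (by fun_prop) continuous_const

theorem abs_inner_map_le_of_mem_ellipsoid (hA : (A : V →ₗ[ℝ] V).IsSymmetric)
    (hA0 : ∀ v, 0 ≤ ⟪A v, v⟫) (hs : 0 ≤ s) {u v : V} (hu : u ∈ ellipsoid A s)
    (hv : v ∈ ellipsoid A s) : |⟪A u, v⟫| ≤ s := by
  have cauchySchwarz := LinearMap.BilinForm.apply_mul_apply_le_of_forall_zero_le
    ((innerₗ V).comp (A : V →ₗ[ℝ] V)) hA0 u v
  have symm : ⟪A v, u⟫ = ⟪A u, v⟫ := (hA v u).trans (real_inner_comm _ _)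
  simp only [LinearMap.comp_apply, innerₗ_apply_apply, ContinuousLinearMap.coe_coe, symm]
    at cauchySchwarz
  refine abs_le_of_sq_le_sq ?_ hs
  rw [sq, sq]
  exact cauchySchwarz.trans (mul_le_mul hu hv (hA0 v) hs)

variable [FiniteDimensional ℝ V]

theorem isBounded_setOf_le_of_homogeneous {f : V → ℝ} (hf : Continuous f)
    (hpos : ∀ v, v ≠ 0 → 0 < f v) {p : ℝ} (hp : 0 < p)
    (hsmul : ∀ a : ℝ, 0 < a → ∀ v, f (a • v) = a ^ p * f v) (s : ℝ) :
    Bornology.IsBounded {v | f v ≤ s} := by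
  obtain ⟨c, hc, hfc⟩ := (isCompact_sphere (0 : V) 1).exists_forall_le' (a := 0) hf.continuousOn
    fun v hv => hpos v (ne_of_mem_sphere hv one_ne_zero)
  refine isBounded_iff_forall_norm_le.2 ⟨max 0 ((s / c) ^ p⁻¹), fun v hv => ?_⟩
  rcases eq_or_ne v 0 with rfl | hv0
  · simp
  · have hunit := hfc (‖v‖⁻¹ • v) (by simp [norm_smul, hv0])
    rw [hsmul _ (by positivity), Real.inv_rpow (norm_nonneg v), le_inv_mul_iff₀ (by positivity),
      mul_comm] at hunit
    have hle : ‖v‖ ^ p ≤ s / c := (le_div_iff₀' hc).2 (hunit.trans hv)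
    exact le_max_of_le_right ((Real.le_rpow_inv_iff_of_pos (norm_nonneg v)
      (le_trans (by positivity) hle) hp).2 hle)

theorem isBounded_ellipsoid (hpos : ∀ v, v ≠ 0 → 0 < ⟪A v, v⟫) :
    Bornology.IsBounded (ellipsoid A s) :=
  isBounded_setOf_le_of_homogeneous (by fun_prop) hpos two_pos
    (fun a _ v => by
      rw [map_smul, real_inner_smul_left, real_inner_smul_right, Real.rpow_two]
      ring) s

variable [MeasurableSpace V] [BorelSpace V] {n : ℕ}

theorem sq_volume_image_ellipsoid_le (hn : 0 < n) (hdim : Module.finrank ℝ V = n)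
    (hA : (A : V →ₗ[ℝ] V).IsSymmetric) (hpos : ∀ v, v ≠ 0 → 0 < ⟪A v, v⟫) (hs : 0 < s) :
    volume.real (A '' ellipsoid A s) ^ 2 ≤ |A.det| * (20000 * s / n) ^ n := by
  have hA0 : ∀ v, 0 ≤ ⟪A v, v⟫ := fun v => by
    rcases eq_or_ne v 0 with rfl | hv
    · simp
    · exact (hpos v hv).le
  have hcompact : IsCompact (ellipsoid A s) :=
    isCompact_of_isClosed_isBounded isClosed_ellipsoid (isBounded_ellipsoid hpos)
  have himage : IsCompact (A '' ellipsoid A s) := hcompact.image A.continuous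
  have hvol : volume.real (A '' ellipsoid A s) = |A.det| * volume.real (ellipsoid A s) := by
    rw [measureReal_def, Measure.addHaar_image_continuousLinearMap, ENNReal.toReal_mul,
      ENNReal.toReal_ofReal (abs_nonneg _), measureReal_def]
  calc volume.real (A '' ellipsoid A s) ^ 2
      = |A.det| * (volume.real (A '' ellipsoid A s) * volume.real (ellipsoid A s)) := by
        rw [sq]; nth_rw 1 [hvol]; ring
    _ ≤ |A.det| * (20000 * s / n) ^ n := by
        gcongr
        refine volume_mul_volume_le_of_abs_inner_le hn hdim hs himage.measurableSet
          himage.measure_lt_top.ne hcompact.measurableSet hcompact.measure_lt_top.ne ?_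
        rintro _ ⟨u, hu, rfl⟩ v hv
        exact abs_inner_map_le_of_mem_ellipsoid hA hA0 hs.le hu hv

theorem integrableOn_of_continuous_of_isBounded {F : Type*} [NormedAddCommGroup F] {C : Set V}
    (hC : Bornology.IsBounded C) {f : V → F} (hf : Continuous f) : IntegrableOn f C :=
  (hf.continuousOn.integrableOn_compact hC.isCompact_closure).mono_set subset_closure

theorem setIntegral_mul_inner_symm_eq_finrank {C : Set V} (hC : Bornology.IsBounded C)
    {w : V → ℝ} (hw : Continuous w) {T : V ≃L[ℝ] V}
    (hT : ∀ u v, ⟪T u, v⟫ = ∫ x in C, w x * ⟪x, u⟫ * ⟪x, v⟫) :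
    ∫ x in C, w x * ⟪x, T.symm x⟫ = Module.finrank ℝ V := by
  have hsymm : ∀ u v, ⟪T.symm u, v⟫ = ⟪u, T.symm v⟫ := fun u v => by
    have := hT (T.symm v) (T.symm u)
    simp only [mul_right_comm _ ⟪_, T.symm v⟫, ← hT, T.apply_symm_apply] at this
    rw [real_inner_comm, this]
  let b := stdOrthonormalBasis ℝ V
  have parseval : ∀ x, w x * ⟪x, T.symm x⟫ = ∑ i, w x * ⟪x, T.symm (b i)⟫ * ⟪x, b i⟫ := fun x => by
    rw [← b.sum_inner_mul_inner x (T.symm x), Finset.mul_sum]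
    refine Finset.sum_congr rfl fun i _ => ?_
    rw [← hsymm, real_inner_comm x (T.symm (b i))]
    ring
  simp_rw [parseval]
  rw [integral_finsetSum _ fun i _ => integrableOn_of_continuous_of_isBounded hC (by fun_prop)]
  simp [← hT]

theorem setIntegral_le_mul_measureReal_add {X : Type*} [MeasurableSpace X] {ν : Measure X}
    {C C' : Set X} {w q : X → ℝ} {W s : ℝ} (hC : C' ⊆ C) (hC' : MeasurableSet C')
    (hw0 : ∀ x, 0 ≤ w x) (hw : IntegrableOn w C' ν) (hwW : ∀ x ∈ C', w x ≤ W) (hW : 0 ≤ W)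
    (hq0 : ∀ x, 0 ≤ q x) (hwq : IntegrableOn (fun x => w x * q x) C ν) (hs : 0 < s)
    (hqs : MeasurableSet {x | q x ≤ s}) (hqs_fin : ν {x | q x ≤ s} ≠ ∞) :
    ∫ x in C', w x ∂ν ≤ W * ν.real {x | q x ≤ s} + s⁻¹ * ∫ x in C, w x * q x ∂ν := by
  have markov : ∀ x ∈ C', w x ≤ {x | q x ≤ s}.indicator (fun _ => W) x + s⁻¹ * (w x * q x) := by
    intro x hx
    have hmul : 0 ≤ w x * q x := mul_nonneg (hw0 x) (hq0 x)
    by_cases hxs : q x ≤ s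
    · rw [indicator_of_mem (mem_ofPred_eq ▸ hxs)]
      exact (hwW x hx).trans (le_add_of_nonneg_right (by positivity))
    · refine le_add_of_nonneg_of_le (indicator_nonneg (fun _ _ => hW) x) ?_
      rw [le_inv_mul_iff₀ hs, mul_comm]
      exact mul_le_mul_of_nonneg_left (not_le.1 hxs).le (hw0 x)
  have hind : Integrable ({x | q x ≤ s}.indicator fun _ => W) ν :=
    (integrable_indicator_iff hqs).2 (integrableOn_const hqs_fin)
  calc ∫ x in C', w x ∂ν
      ≤ ∫ x in C', ({x | q x ≤ s}.indicator (fun _ => W) x + s⁻¹ * (w x * q x)) ∂ν :=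
        setIntegral_mono_on hw (hind.integrableOn.add ((hwq.mono_set hC).const_mul _)) hC' markov
    _ = (∫ x in C', {x | q x ≤ s}.indicator (fun _ => W) x ∂ν) +
          s⁻¹ * ∫ x in C', w x * q x ∂ν := by
        rw [integral_add hind.integrableOn ((hwq.mono_set hC).const_mul _), integral_const_mul]
    _ ≤ (∫ x, {x | q x ≤ s}.indicator (fun _ => W) x ∂ν) + s⁻¹ * ∫ x in C, w x * q x ∂ν := by
        gcongr
        · exact .of_forall fun x => indicator_nonneg (fun _ _ => hW) x
        · exact Measure.restrict_le_self
        · exact .of_forall fun x => mul_nonneg (hw0 x) (hq0 x)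
    _ = W * ν.real {x | q x ≤ s} + s⁻¹ * ∫ x in C, w x * q x ∂ν := by
        rw [integral_indicator hqs, setIntegral_const, smul_eq_mul, mul_comm]

/- The image of the ellipsoid of level `s = 2n/μ` has volume at least `μ/(2W)` by Markov's
inequality, since `∫ w ⟪x, A⁻¹x⟫ = n`; the Santaló-type bound turns this into a lower bound for
the determinant. -/
theorem sq_div_mul_pow_le_abs_det (hn : 0 < n) (hdim : Module.finrank ℝ V = n) {C : Set V}
    {w : V → ℝ} (hC : Bornology.IsBounded C) (hw : Continuous w) (hw0 : ∀ x, 0 ≤ w x)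
    (hA : ∀ u v, ⟪A u, v⟫ = ∫ x in C, w x * ⟪x, u⟫ * ⟪x, v⟫)
    (hpos : ∀ v, v ≠ 0 → 0 < ⟪A v, v⟫) {W μ : ℝ} (hW : 0 < W) (hμ : 0 < μ) {C' : Set V}
    (hC'C : C' ⊆ C) (hC' : MeasurableSet C') (hwW : ∀ x ∈ C', w x ≤ W)
    (hμw : μ ≤ ∫ x in C', w x) : (μ / (2 * W)) ^ 2 * (μ / 40000) ^ n ≤ |A.det| := by
  have : (0 : ℝ) < n := by exact_mod_cast hn
  have hinj : Function.Injective A := (injective_iff_map_eq_zero A).2 fun v hv => by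
    by_contra h
    simpa [hv] using hpos v h
  obtain ⟨T, rfl⟩ : ∃ T : V ≃L[ℝ] V, (T : V →L[ℝ] V) = A :=
    ⟨(LinearEquiv.ofInjectiveEndo (A : V →ₗ[ℝ] V) hinj).toContinuousLinearEquiv, rfl⟩
  have hsymm : ((T : V →L[ℝ] V) : V →ₗ[ℝ] V).IsSymmetric := fun u v => by
    refine (hA u v).trans (Eq.trans ?_ ((hA v u).symm.trans (real_inner_comm _ _)))
    simp_rw [mul_right_comm]
  set s := 2 * n / μ with hs
  have hs0 : 0 < s := by positivity
  have image_eq : T '' ellipsoid T s = {x | ⟪x, T.symm x⟫ ≤ s} := by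
    ext x
    rw [← T.coe_toLinearEquiv, LinearEquiv.image_eq_preimage_symm]
    simp [ellipsoid]
  have hcompact : IsCompact (T '' ellipsoid T s) :=
    (isCompact_of_isClosed_isBounded isClosed_ellipsoid (isBounded_ellipsoid hpos)).image
      T.continuous
  have markov := setIntegral_le_mul_measureReal_add (q := fun x => ⟪x, T.symm x⟫) hC'C hC' hw0
    (integrableOn_of_continuous_of_isBounded (hC.subset hC'C) hw) hwW hW.le
    (fun x => by
      rcases eq_or_ne x 0 with rfl | hx
      · simp
      · simpa using (hpos (T.symm x) (by simpa using hx)).le)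
    (integrableOn_of_continuous_of_isBounded hC (by fun_prop)) hs0
    (image_eq ▸ hcompact.measurableSet) (image_eq ▸ hcompact.measure_lt_top.ne)
  rw [setIntegral_mul_inner_symm_eq_finrank hC hw hA, hdim, ← image_eq] at markov
  have image_ge : μ / (2 * W) ≤ volume.real (T '' ellipsoid T s) := by
    have : s⁻¹ * n = μ / 2 := by rw [hs]; field_simp
    rw [div_le_iff₀ (by positivity)]
    linarith
  have image_le := sq_volume_image_ellipsoid_le hn hdim hsymm hpos hs0
  rw [show 20000 * s / n = 40000 / μ by rw [hs]; field_simp; norm_num] at image_le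
  calc (μ / (2 * W)) ^ 2 * (μ / 40000) ^ n
      ≤ (|(T : V →L[ℝ] V).det| * (40000 / μ) ^ n) * (μ / 40000) ^ n := by
        gcongr
        exact (pow_le_pow_left₀ (by positivity) image_ge 2).trans image_le
    _ = |(T : V →L[ℝ] V).det| := by
        rw [mul_assoc, ← mul_pow]
        field_simp
        simp

end MomentMatrix

section MomentMap

variable {V : Type*} [NormedAddCommGroup V] [InnerProductSpace ℝ V]

theorem exists_mem_nhds_inner_ne_zero {C : Set V} (hC : C ∈ nhds 0) {u v : V} (hu : u ≠ 0)
    (hv : v ≠ 0) : ∃ x, C ∈ nhds x ∧ ⟪x, u⟫ ≠ 0 ∧ ⟪x, v⟫ ≠ 0 := by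
  obtain ⟨z, hzu, hzv⟩ : ∃ z : V, ⟪z, u⟫ ≠ 0 ∧ ⟪z, v⟫ ≠ 0 := by
    by_cases h : ⟪u, v⟫ = 0
    · refine ⟨u + v, ?_, ?_⟩
      · rwa [inner_add_left, real_inner_comm u v, h, add_zero, inner_self_ne_zero]
      · rwa [inner_add_left, h, zero_add, inner_self_ne_zero]
    · exact ⟨u, inner_self_ne_zero.2 hu, h⟩
  have hsmul : Filter.Tendsto (fun ε : ℝ => ε • z) (nhdsWithin 0 (Ioi 0)) (nhds 0) := by
    have : ContinuousAt (fun ε : ℝ => ε • z) 0 := by fun_prop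
    simpa using this.tendsto.mono_left nhdsWithin_le_nhds
  obtain ⟨ε, hεC, hε⟩ :=
    ((hsmul.eventually (eventually_mem_nhds_iff.2 hC)).and self_mem_nhdsWithin).exists
  refine ⟨ε • z, hεC, ?_, ?_⟩ <;> rw [real_inner_smul_left]
  exacts [mul_ne_zero (ne_of_gt hε) hzu, mul_ne_zero (ne_of_gt hε) hzv]

variable {C : Set V} {ψ ψ' : ℝ → ℝ}

theorem continuous_smul_innerSL_smulRight (hψ' : Continuous ψ') (ξ : V) :
    Continuous fun x : V => ψ' ⟪x, ξ⟫ • (innerSL ℝ x).smulRight x := by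
  have : Continuous fun x : V => ContinuousLinearMap.smulRightL ℝ V V (innerSL ℝ x) x := by
    fun_prop
  exact (show Continuous fun x : V => ψ' ⟪x, ξ⟫ by fun_prop).smul this

variable [FiniteDimensional ℝ V] [MeasurableSpace V] [BorelSpace V]

theorem setIntegral_pos_of_continuous_of_mem_nhds (hC : Bornology.IsBounded C) {f : V → ℝ}
    (hf : Continuous f) (hf0 : ∀ x, 0 ≤ f x) {x : V} (hx : C ∈ nhds x) (hfx : 0 < f x) :
    0 < ∫ x in C, f x := by
  rw [setIntegral_pos_iff_support_of_nonneg_ae (.of_forall hf0)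
    (integrableOn_of_continuous_of_isBounded hC hf)]
  exact MeasureTheory.Measure.measure_pos_of_mem_nhds volume
    (Filter.inter_mem (hf.isOpen_support.mem_nhds hfx.ne') hx)

/-- The gradient of the convex function `ξ ↦ ∫ x in C, Ψ ⟪x, ξ⟫`, where `ψ = Ψ'`. -/
def momentMap (C : Set V) (ψ : ℝ → ℝ) (ξ : V) : V := ∫ x in C, ψ ⟪x, ξ⟫ • x

/-- The Hessian of the convex function `ξ ↦ ∫ x in C, Ψ ⟪x, ξ⟫`, where `ψ' = Ψ''`. -/
def momentHessian (C : Set V) (ψ' : ℝ → ℝ) (ξ : V) : V →L[ℝ] V :=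
  ∫ x in C, ψ' ⟪x, ξ⟫ • (innerSL ℝ x).smulRight x

theorem inner_momentMap (hC : Bornology.IsBounded C) (hψ : Continuous ψ) (ξ η : V) :
    ⟪momentMap C ψ ξ, η⟫ = ∫ x in C, ψ ⟪x, ξ⟫ * ⟪x, η⟫ := by
  rw [real_inner_comm, momentMap,
    ← integral_inner (integrableOn_of_continuous_of_isBounded hC (by fun_prop))]
  simp only [real_inner_smul_right, real_inner_comm η]

theorem inner_momentHessian (hC : Bornology.IsBounded C) (hψ' : Continuous ψ') (ξ u v : V) :
    ⟪momentHessian C ψ' ξ u, v⟫ = ∫ x in C, ψ' ⟪x, ξ⟫ * ⟪x, u⟫ * ⟪x, v⟫ := by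
  rw [momentHessian, ContinuousLinearMap.integral_apply
      (integrableOn_of_continuous_of_isBounded hC (continuous_smul_innerSL_smulRight hψ' ξ)),
    real_inner_comm, ← integral_inner]
  · simp only [smul_apply, ContinuousLinearMap.smulRight_apply,
      innerSL_apply_apply, real_inner_smul_right, real_inner_comm v, mul_assoc]
  · exact integrableOn_of_continuous_of_isBounded hC
      ((continuous_smul_innerSL_smulRight hψ' ξ).clm_apply continuous_const)

theorem momentHessian_posDef (hC : Bornology.IsBounded C) (hC0 : C ∈ nhds 0)
    (hψ' : Continuous ψ') (hψ'0 : ∀ t, 0 ≤ ψ' t) (hψ'pos : ∀ t, t ≠ 0 → 0 < ψ' t) {ξ v : V}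
    (hξ : ξ ≠ 0) (hv : v ≠ 0) : 0 < ⟪momentHessian C ψ' ξ v, v⟫ := by
  obtain ⟨x, hx, hxξ, hxv⟩ := exists_mem_nhds_inner_ne_zero hC0 hξ hv
  rw [inner_momentHessian hC hψ']
  simp_rw [mul_assoc, ← sq]
  exact setIntegral_pos_of_continuous_of_mem_nhds hC (by fun_prop)
    (fun x => mul_nonneg (hψ'0 _) (sq_nonneg _)) hx (mul_pos (hψ'pos _ hxξ) (by positivity))

theorem hasFDerivAt_momentMap (hCm : MeasurableSet C) (hC : Bornology.IsBounded C)
    (hψ : ∀ t, HasDerivAt ψ (ψ' t) t) (hψ' : Continuous ψ') (ξ : V) :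
    HasFDerivAt (momentMap C ψ) (momentHessian C ψ' ξ) ξ := by
  have hψc : Continuous ψ := continuous_iff_continuousAt.2 fun t => (hψ t).continuousAt
  obtain ⟨R, hR, hCR⟩ := hC.exists_pos_norm_le
  obtain ⟨M, hM⟩ :=
    (isCompact_Icc (a := -(R * (‖ξ‖ + 1))) (b := R * (‖ξ‖ + 1))).exists_bound_of_continuousOn
      hψ'.continuousOn
  refine hasFDerivAt_integral_of_dominated_of_fderiv_le (μ := volume.restrict C)
    (F := fun ξ x => ψ ⟪x, ξ⟫ • x) (F' := fun ξ x => ψ' ⟪x, ξ⟫ • (innerSL ℝ x).smulRight x)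
    (bound := fun _ => M * (R * R)) (ball_mem_nhds ξ one_pos) ?_ ?_ ?_ ?_ ?_ ?_
  · exact .of_forall fun η => (show Continuous _ by fun_prop).aestronglyMeasurable
  · exact integrableOn_of_continuous_of_isBounded hC (by fun_prop)
  · exact (continuous_smul_innerSL_smulRight hψ' ξ).aestronglyMeasurable
  · refine ae_restrict_of_forall_mem hCm fun x hx η hη => ?_
    have hη_norm : ‖η‖ ≤ ‖ξ‖ + 1 := by
      linarith [norm_le_norm_add_norm_sub' η ξ, mem_ball_iff_norm.1 hη]
    have hψ'_le := hM ⟪x, η⟫ (abs_le.1 ((abs_real_inner_le_norm x η).trans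
      (mul_le_mul (hCR x hx) hη_norm (norm_nonneg _) hR.le)))
    rw [norm_smul, ContinuousLinearMap.norm_smulRight_apply, innerSL_apply_norm]
    exact mul_le_mul hψ'_le (mul_self_le_mul_self (norm_nonneg x) (hCR x hx)) (by positivity)
      ((norm_nonneg _).trans hψ'_le)
  · exact integrableOn_const hC.measure_lt_top.ne
  · refine .of_forall fun x η _ => ?_
    refine (((hψ ⟪x, η⟫).comp_hasFDerivAt η (innerSL ℝ x).hasFDerivAt).smul_const x).congr_fderiv
      (ContinuousLinearMap.ext fun v => ?_)
    simp [mul_smul]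

theorem momentMap_injective (hC : Bornology.IsBounded C) (hC0 : C ∈ nhds 0) (hψ : StrictMono ψ)
    (hψc : Continuous ψ) : Function.Injective (momentMap C ψ) := by
  intro u v huv
  by_contra hne
  have hsub : u - v ≠ 0 := sub_ne_zero.2 hne
  have hint : ∀ η, IntegrableOn (fun x => ψ ⟪x, η⟫ * ⟪x, u - v⟫) C := fun η =>
    integrableOn_of_continuous_of_isBounded hC (by fun_prop)
  have integral_eq_zero : ∫ x in C, (ψ ⟪x, u⟫ - ψ ⟪x, v⟫) * (⟪x, u⟫ - ⟪x, v⟫) = 0 := by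
    simp_rw [← inner_sub_right, sub_mul]
    rw [integral_sub (hint u) (hint v), ← inner_momentMap hC hψc, ← inner_momentMap hC hψc, huv,
      sub_self]
  obtain ⟨x, hx, hxuv, -⟩ := exists_mem_nhds_inner_ne_zero hC0 hsub hsub
  refine (setIntegral_pos_of_continuous_of_mem_nhds hC (by fun_prop) (fun x => ?_) hx ?_).ne'
    integral_eq_zero
  · rcases le_total ⟪x, u⟫ ⟪x, v⟫ with h | h
    · exact mul_nonneg_of_nonpos_of_nonpos (sub_nonpos.2 (hψ.monotone h)) (sub_nonpos.2 h)
    · exact mul_nonneg (sub_nonneg.2 (hψ.monotone h)) (sub_nonneg.2 h)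
  · rw [inner_sub_right, sub_ne_zero] at hxuv
    rcases lt_or_gt_of_ne hxuv with h | h
    · exact mul_pos_of_neg_of_neg (sub_neg.2 (hψ h)) (sub_neg.2 h)
    · exact mul_pos (sub_pos.2 (hψ h)) (sub_pos.2 h)

theorem mul_volume_le_volume_image_momentMap (hCm : MeasurableSet C)
    (hC : Bornology.IsBounded C) (hC0 : C ∈ nhds 0) (hψ : ∀ t, HasDerivAt ψ (ψ' t) t)
    (hψm : StrictMono ψ) (hψ' : Continuous ψ') {δ : ℝ} (hδ : 0 ≤ δ) {S : Set V}
    (hS : MeasurableSet S) (hSb : Bornology.IsBounded S)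
    (hdet : ∀ ξ ∈ S, δ ≤ |(momentHessian C ψ' ξ).det|) :
    MeasurableSet (momentMap C ψ '' S) ∧ volume (momentMap C ψ '' S) ≠ ∞ ∧
      δ * volume.real S ≤ volume.real (momentMap C ψ '' S) := by
  have hψc : Continuous ψ := continuous_iff_continuousAt.2 fun t => (hψ t).continuousAt
  have hderiv := hasFDerivAt_momentMap hCm hC hψ hψ'
  have hderivS : ∀ ξ ∈ S, HasFDerivWithinAt (momentMap C ψ) (momentHessian C ψ' ξ) S ξ :=
    fun ξ _ => (hderiv ξ).hasFDerivWithinAt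
  have hinj : InjOn (momentMap C ψ) S := (momentMap_injective hC hC0 hψm hψc).injOn
  have hcont : Continuous (momentMap C ψ) :=
    continuous_iff_continuousAt.2 fun ξ => (hderiv ξ).continuousAt
  have hfin : volume (momentMap C ψ '' S) ≠ ∞ :=
    ((hSb.isCompact_closure.image hcont).isBounded.subset
      (image_mono subset_closure)).measure_lt_top.ne
  refine ⟨measurable_image_of_fderivWithin hS hderivS hinj, hfin, ?_⟩
  have hle : ENNReal.ofReal δ * volume S ≤ volume (momentMap C ψ '' S) := by
    rw [← lintegral_abs_det_fderiv_eq_addHaar_image volume hS hderivS hinj, ← setLIntegral_const]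
    exact setLIntegral_mono' hS fun ξ hξ => ENNReal.ofReal_le_ofReal (hdet ξ hξ)
  simpa [measureReal_def, hδ] using ENNReal.toReal_mono hfin hle

theorem volume_mul_volume_le_of_momentMap {n : ℕ} (hn : 0 < n)
    (hdim : Module.finrank ℝ V = n) (hCm : MeasurableSet C) (hC : Bornology.IsBounded C)
    (hC0 : C ∈ nhds 0) (hψ : ∀ t, HasDerivAt ψ (ψ' t) t) (hψm : StrictMono ψ)
    (hψ' : Continuous ψ') (hψ'0 : ∀ t, 0 ≤ ψ' t) (hψ'pos : ∀ t, t ≠ 0 → 0 < ψ' t) {W μ κ : ℝ}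
    (hW : 0 < W) (hμ : 0 < μ) (hκ : 0 < κ) {S D : Set V} (hS : MeasurableSet S)
    (hSb : Bornology.IsBounded S) (hS0 : 0 ∉ S) (hD : MeasurableSet D) (hDfin : volume D ≠ ∞)
    (hC' : ∀ ξ ∈ S, ∃ C' ⊆ C, MeasurableSet C' ∧ (∀ x ∈ C', ψ' ⟪x, ξ⟫ ≤ W) ∧
      μ ≤ ∫ x in C', ψ' ⟪x, ξ⟫)
    (hSD : ∀ ξ ∈ S, ∀ η ∈ D, |∫ x in C, ψ ⟪x, ξ⟫ * ⟪x, η⟫| ≤ κ) :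
    volume.real S * volume.real D ≤ (2 * W / μ) ^ 2 * (800000000 * κ / (μ * n)) ^ n := by
  have hdet : ∀ ξ ∈ S, (μ / (2 * W)) ^ 2 * (μ / 40000) ^ n ≤ |(momentHessian C ψ' ξ).det| := by
    intro ξ hξ
    obtain ⟨C', hC'C, hC'm, hC'W, hC'μ⟩ := hC' ξ hξ
    exact sq_div_mul_pow_le_abs_det hn hdim hC (w := fun x => ψ' ⟪x, ξ⟫) (by fun_prop)
      (fun x => hψ'0 _) (inner_momentHessian hC hψ' ξ)
      (fun v hv => momentHessian_posDef hC hC0 hψ' hψ'0 hψ'pos (ne_of_mem_of_not_mem hξ hS0) hv)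
      hW hμ hC'C hC'm hC'W hC'μ
  obtain ⟨himage, himage_fin, himage_vol⟩ :=
    mul_volume_le_volume_image_momentMap hCm hC hC0 hψ hψm hψ' (by positivity) hS hSb hdet
  have himage_le : volume.real (momentMap C ψ '' S) * volume.real D ≤ (20000 * κ / n) ^ n := by
    refine volume_mul_volume_le_of_abs_inner_le hn hdim hκ himage himage_fin hD hDfin ?_
    rintro _ ⟨ξ, hξ, rfl⟩ η hη
    rw [inner_momentMap hC (continuous_iff_continuousAt.2 fun t => (hψ t).continuousAt)]
    exact hSD ξ hξ η hη
  calc volume.real S * volume.real D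
      = (2 * W / μ) ^ 2 * (40000 / μ) ^ n *
          ((μ / (2 * W)) ^ 2 * (μ / 40000) ^ n * volume.real S * volume.real D) := by
        have : (40000 / μ) ^ n * (μ / 40000) ^ n = 1 := by rw [← mul_pow]; field_simp; simp
        field_simp
        rw [mul_assoc, this, mul_one]
    _ ≤ (2 * W / μ) ^ 2 * (40000 / μ) ^ n * (20000 * κ / n) ^ n := by
        gcongr
        exact (mul_le_mul_of_nonneg_right himage_vol measureReal_nonneg).trans himage_le
    _ = (2 * W / μ) ^ 2 * (800000000 * κ / (μ * n)) ^ n := by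
        rw [mul_assoc, ← mul_pow, div_mul_div_comm]
        ring_nf

end MomentMap

section YoungInequality

theorem rpow_le_div_mul_rpow_add {q p a : ℝ} (hq : 0 ≤ q) (hp : 0 < p) (hqp : q ≤ p)
    (ha : 0 ≤ a) : a ^ q ≤ q / p * a ^ p + (1 - q / p) := by
  have amgm := Real.geom_mean_le_arith_mean2_weighted (w₁ := q / p) (w₂ := 1 - q / p)
    (p₁ := a ^ p) (p₂ := 1) (by positivity) (sub_nonneg.2 ((div_le_one hp).2 hqp))
    (by positivity) zero_le_one (by ring)
  rwa [Real.one_rpow, mul_one, mul_one, ← Real.rpow_mul ha, mul_div_cancel₀ _ hp.ne'] at amgm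

theorem rpow_sub_one_mul_le {p a b : ℝ} (hp : 1 ≤ p) (ha : 0 ≤ a) (hb : 0 ≤ b) :
    a ^ (p - 1) * b ≤ (p - 1) / p * a ^ p + 1 / p * b ^ p := by
  have hp0 : 0 < p := by linarith
  have amgm := Real.geom_mean_le_arith_mean2_weighted (w₁ := (p - 1) / p) (w₂ := 1 / p)
    (p₁ := a ^ p) (p₂ := b ^ p) (div_nonneg (by linarith) hp0.le) (by positivity)
    (by positivity) (by positivity) (by field_simp; ring)
  rwa [← Real.rpow_mul ha, ← Real.rpow_mul hb, mul_div_cancel₀ _ hp0.ne',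
    mul_div_cancel₀ _ hp0.ne', Real.rpow_one] at amgm

end YoungInequality

section AbsMoment

variable {V : Type*} [NormedAddCommGroup V] [InnerProductSpace ℝ V]

theorem continuous_abs_inner_rpow {p : ℝ} (hp : 0 ≤ p) (ξ : V) :
    Continuous fun x : V => |⟪x, ξ⟫| ^ p :=
  (by fun_prop : Continuous fun x : V => |⟪x, ξ⟫|).rpow_const fun _ => .inr hp

variable [MeasurableSpace V] [BorelSpace V] [FiniteDimensional ℝ V] {C : Set V} {p q : ℝ}

/-- The `p`-th absolute moment of the linear functional `⟪·, ξ⟫` on `C`. -/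
def absMoment (C : Set V) (p : ℝ) (ξ : V) : ℝ := ∫ x in C, |⟪x, ξ⟫| ^ p

/-- The unit ball of the norm `ξ ↦ ‖⟪·, ξ⟫‖` of `L_p(C)`; for `p ≥ 1` it is the polar of the
`L_p`-centroid body `Z_p(C)`. -/
def momentBody (C : Set V) (p : ℝ) : Set V := {ξ | absMoment C p ξ ≤ 1}

theorem absMoment_one (ξ : V) : absMoment C 1 ξ = ∫ x in C, |⟪x, ξ⟫| := by
  simp only [absMoment, Real.rpow_one]

theorem absMoment_natCast (k : ℕ) (ξ : V) : absMoment C k ξ = ∫ x in C, |⟪x, ξ⟫| ^ k := by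
  simp only [absMoment, Real.rpow_natCast]

theorem absMoment_nonneg (ξ : V) : 0 ≤ absMoment C p ξ :=
  integral_nonneg fun _ => Real.rpow_nonneg (abs_nonneg _) _

theorem absMoment_zero_right (hp : p ≠ 0) : absMoment C p 0 = 0 := by
  simp [absMoment, Real.zero_rpow hp]

theorem absMoment_smul (a : ℝ) (ξ : V) : absMoment C p (a • ξ) = |a| ^ p * absMoment C p ξ := by
  unfold absMoment
  rw [← integral_const_mul]
  simp_rw [real_inner_smul_right, abs_mul, Real.mul_rpow (abs_nonneg _) (abs_nonneg _)]

theorem absMoment_smul_of_nonneg {a : ℝ} (ha : 0 ≤ a) (ξ : V) :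
    absMoment C p (a • ξ) = a ^ p * absMoment C p ξ := by
  rw [absMoment_smul, abs_of_nonneg ha]

theorem continuous_absMoment (hC : IsCompact C) (hp : 0 ≤ p) : Continuous (absMoment C p) :=
  continuous_parametric_integral_of_continuous (f := fun ξ x => |⟪x, ξ⟫| ^ p)
    ((by fun_prop : Continuous fun z : V × V => |⟪z.2, z.1⟫|).rpow_const fun _ => .inr hp) hC

theorem integrableOn_abs_inner_rpow (hC : IsCompact C) (hp : 0 ≤ p) (ξ : V) :
    IntegrableOn (fun x => |⟪x, ξ⟫| ^ p) C :=
  integrableOn_of_continuous_of_isBounded hC.isBounded (continuous_abs_inner_rpow hp ξ)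

theorem absMoment_pos (hC : IsCompact C) (hC0 : C ∈ nhds 0) (hp : 0 ≤ p) {ξ : V} (hξ : ξ ≠ 0) :
    0 < absMoment C p ξ := by
  obtain ⟨x, hx, hxξ, -⟩ := exists_mem_nhds_inner_ne_zero hC0 hξ hξ
  exact setIntegral_pos_of_continuous_of_mem_nhds hC.isBounded (continuous_abs_inner_rpow hp ξ)
    (fun x => by positivity) hx (by positivity)

theorem isClosed_momentBody (hC : IsCompact C) (hp : 0 ≤ p) : IsClosed (momentBody C p) :=
  isClosed_le (continuous_absMoment hC hp) continuous_const

theorem isBounded_momentBody (hC : IsCompact C) (hC0 : C ∈ nhds 0) (hp : 0 < p) :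
    Bornology.IsBounded (momentBody C p) :=
  isBounded_setOf_le_of_homogeneous (continuous_absMoment hC hp.le)
    (fun _ => absMoment_pos hC hC0 hp.le) hp (fun _ ha => absMoment_smul_of_nonneg ha.le) 1

theorem isCompact_momentBody (hC : IsCompact C) (hC0 : C ∈ nhds 0) (hp : 0 < p) :
    IsCompact (momentBody C p) :=
  isCompact_of_isClosed_isBounded (isClosed_momentBody hC hp.le) (isBounded_momentBody hC hC0 hp)

theorem momentBody_subset_of_le (hC : IsCompact C) (hC1 : volume.real C = 1) (hq : 0 ≤ q)
    (hp : 0 < p) (hqp : q ≤ p) : momentBody C p ⊆ momentBody C q := by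
  intro ξ hξ
  have hint := integrableOn_abs_inner_rpow hC hp.le ξ
  have hconst : IntegrableOn (fun _ : V => 1 - q / p) C :=
    integrableOn_const hC.measure_lt_top.ne
  calc absMoment C q ξ ≤ ∫ x in C, (q / p * |⟪x, ξ⟫| ^ p + (1 - q / p)) :=
        setIntegral_mono (integrableOn_abs_inner_rpow hC hq ξ) ((hint.const_mul _).add hconst)
          fun x => rpow_le_div_mul_rpow_add hq hp hqp (abs_nonneg _)
    _ = q / p * absMoment C p ξ + (1 - q / p) := by
        rw [integral_add (hint.const_mul _) hconst, integral_const_mul, setIntegral_const, hC1,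
          one_smul, absMoment]
    _ ≤ q / p * 1 + (1 - q / p) := by
        gcongr
        exact hξ
    _ = 1 := by ring

theorem volume_momentBody_le_of_le (hC : IsCompact C) (hC1 : volume.real C = 1)
    (hC0 : C ∈ nhds 0) (hq : 0 < q) (hqp : q ≤ p) :
    volume.real (momentBody C p) ≤ volume.real (momentBody C q) :=
  measureReal_mono (momentBody_subset_of_le hC hC1 hq.le (hq.trans_le hqp) hqp)
    (isCompact_momentBody hC hC0 hq).measure_lt_top.ne

theorem setIntegral_rpow_sub_one_mul_le_one (hC : IsCompact C) (hp : 1 ≤ p) {ξ η : V}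
    (hξ : ξ ∈ momentBody C p) (hη : η ∈ momentBody C p) :
    ∫ x in C, |⟪x, ξ⟫| ^ (p - 1) * |⟪x, η⟫| ≤ 1 := by
  have hp0 : 0 < p := one_pos.trans_le hp
  have hp1 : 0 ≤ p - 1 := sub_nonneg.2 hp
  have hintξ := (integrableOn_abs_inner_rpow hC hp0.le ξ).const_mul ((p - 1) / p)
  have hintη := (integrableOn_abs_inner_rpow hC hp0.le η).const_mul (1 / p)
  calc ∫ x in C, |⟪x, ξ⟫| ^ (p - 1) * |⟪x, η⟫|
      ≤ ∫ x in C, ((p - 1) / p * |⟪x, ξ⟫| ^ p + 1 / p * |⟪x, η⟫| ^ p) := by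
        refine setIntegral_mono ?_ (hintξ.add hintη) fun x =>
          rpow_sub_one_mul_le hp (abs_nonneg _) (abs_nonneg _)
        exact integrableOn_of_continuous_of_isBounded hC.isBounded
          ((continuous_abs_inner_rpow hp1 ξ).mul (by fun_prop))
    _ = (p - 1) / p * absMoment C p ξ + 1 / p * absMoment C p η := by
        rw [integral_add hintξ hintη, integral_const_mul, integral_const_mul, absMoment, absMoment]
    _ ≤ (p - 1) / p * 1 + 1 / p * 1 := by
        gcongr
        · exact hξ
        · exact hη
    _ = 1 := by field_simp; ring

end AbsMoment

section FirstMoment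

theorem setIntegral_le_setIntegral_inter {X : Type*} [MeasurableSpace X] {ν : Measure X}
    {C S : Set X} {f g : X → ℝ} (hf : IntegrableOn f C ν) (hg : IntegrableOn g C ν)
    (hS : MeasurableSet S) (hgf : ∀ x ∈ S, g x ≤ f x) (hg0 : ∀ x ∉ S, g x ≤ 0) :
    ∫ x in C, g x ∂ν ≤ ∫ x in C ∩ S, f x ∂ν := by
  rw [← setIntegral_indicator hS]
  exact setIntegral_mono hg (Integrable.indicator hf hS)
    fun x => le_indicator_apply (hgf x) (hg0 x)

variable {V : Type*} [NormedAddCommGroup V] [InnerProductSpace ℝ V] [MeasurableSpace V]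
  [BorelSpace V] [FiniteDimensional ℝ V] {C : Set V}

theorem le_setIntegral_inv_one_add_sq_inner (hC : IsCompact C) (hC1 : volume.real C = 1) {ξ : V}
    (hξ : ξ ∈ momentBody C 1) :
    1 / 32 ≤ ∫ x in C ∩ {x | |⟪x, ξ⟫| ≤ 4}, 1 / (1 + ⟪x, ξ⟫ ^ 2) := by
  have hint : IntegrableOn (fun x => 1 / (1 + ⟪x, ξ⟫ ^ 2)) C :=
    integrableOn_of_continuous_of_isBounded hC.isBounded
      (by fun_prop (disch := intro; positivity))
  have hconst : IntegrableOn (fun _ : V => (1 / 17 : ℝ)) C :=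
    integrableOn_const hC.measure_lt_top.ne
  have habs : IntegrableOn (fun x => 1 / 68 * |⟪x, ξ⟫|) C :=
    integrableOn_of_continuous_of_isBounded hC.isBounded (by fun_prop)
  have hmoment : ∫ x in C, |⟪x, ξ⟫| ≤ 1 := absMoment_one (C := C) ξ ▸ hξ
  calc (1 / 32 : ℝ) ≤ 1 / 17 - 1 / 68 * ∫ x in C, |⟪x, ξ⟫| := by linarith
    _ = ∫ x in C, (1 / 17 - 1 / 68 * |⟪x, ξ⟫|) := by
        rw [integral_sub hconst habs, integral_const_mul, setIntegral_const, hC1, one_smul]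
    _ ≤ ∫ x in C ∩ {x | |⟪x, ξ⟫| ≤ 4}, 1 / (1 + ⟪x, ξ⟫ ^ 2) := by
        refine setIntegral_le_setIntegral_inter hint (hconst.sub habs)
          (measurableSet_le (by fun_prop) measurable_const) (fun x hx => ?_) fun x hx => ?_
        · have hsq : ⟪x, ξ⟫ ^ 2 ≤ 4 ^ 2 := sq_le_sq' (abs_le.1 hx).1 (abs_le.1 hx).2
          calc 1 / 17 - 1 / 68 * |⟪x, ξ⟫| ≤ 1 / (1 + 4 ^ 2) := by
                linarith [abs_nonneg ⟪x, ξ⟫]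
            _ ≤ 1 / (1 + ⟪x, ξ⟫ ^ 2) := by gcongr
        · have hlt : 4 < |⟪x, ξ⟫| := not_le.1 hx
          linarith

theorem abs_setIntegral_arctan_inner_mul_inner_le_two (hC : IsCompact C) (ξ : V) {η : V}
    (hη : η ∈ momentBody C 1) : |∫ x in C, Real.arctan ⟪x, ξ⟫ * ⟪x, η⟫| ≤ 2 := by
  have harctan : ∀ t, |Real.arctan t| ≤ 2 := fun t => abs_le.2
    ⟨by linarith [Real.neg_pi_div_two_lt_arctan t, Real.pi_lt_four],
      by linarith [Real.arctan_lt_pi_div_two t, Real.pi_lt_four]⟩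
  have hmoment : ∫ x in C, |⟪x, η⟫| ≤ 1 := absMoment_one (C := C) η ▸ hη
  calc |∫ x in C, Real.arctan ⟪x, ξ⟫ * ⟪x, η⟫|
      ≤ ∫ x in C, 2 * |⟪x, η⟫| := by
        rw [← Real.norm_eq_abs]
        refine norm_integral_le_of_norm_le ?_ (.of_forall fun x => ?_)
        · exact integrableOn_of_continuous_of_isBounded hC.isBounded (by fun_prop)
        · rw [norm_mul, Real.norm_eq_abs, Real.norm_eq_abs]
          gcongr
          exact harctan _
    _ ≤ 2 := by rw [integral_const_mul]; linarith

theorem sq_volume_momentBody_one_le {n : ℕ} (hn : 0 < n) (hdim : Module.finrank ℝ V = n)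
    (hC : IsCompact C) (hC1 : volume.real C = 1) (hC0 : C ∈ nhds 0) :
    volume.real (momentBody C 1) ^ 2 ≤ (2 ^ 48 / n) ^ n := by
  have : Nontrivial V := Module.nontrivial_of_finrank_pos (R := ℝ) (by omega)
  have hcompact := isCompact_momentBody hC hC0 one_pos
  have hmap := volume_mul_volume_le_of_momentMap hn hdim hC.measurableSet hC.isBounded hC0
    (ψ := Real.arctan) (ψ' := fun t => 1 / (1 + t ^ 2)) Real.hasDerivAt_arctan
    Real.arctan_strictMono (by fun_prop (disch := intro; positivity)) (fun t => by positivity)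
    (fun t _ => by positivity) (W := 1) (μ := 1 / 32) (κ := 2) one_pos (by norm_num) two_pos
    (S := momentBody C 1 \ {0}) (D := momentBody C 1)
    (hcompact.measurableSet.diff (measurableSet_singleton _))
    (hcompact.isBounded.subset sdiff_subset) (by simp) hcompact.measurableSet
    hcompact.measure_lt_top.ne
    (fun ξ hξ => ⟨C ∩ {x | |⟪x, ξ⟫| ≤ 4}, inter_subset_left,
      hC.measurableSet.inter (measurableSet_le (by fun_prop) measurable_const),
      fun x _ => div_le_one_of_le₀ (by linarith [sq_nonneg ⟪x, ξ⟫]) (by positivity),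
      le_setIntegral_inv_one_add_sq_inner hC hC1 hξ.1⟩)
    fun ξ _ η hη => abs_setIntegral_arctan_inner_mul_inner_le_two hC ξ hη
  rw [measureReal_def, measure_sdiff_null (measure_singleton _), ← measureReal_def, ← sq] at hmap
  calc volume.real (momentBody C 1) ^ 2
      ≤ (2 * 1 / (1 / 32)) ^ 2 * (800000000 * 2 / (1 / 32 * n)) ^ n := hmap
    _ ≤ (2 ^ 12) ^ n * (800000000 * 2 / (1 / 32 * n)) ^ n := by
        gcongr
        exact le_trans (by norm_num) (le_self_pow₀ (by norm_num : (1 : ℝ) ≤ 2 ^ 12) hn.ne')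
    _ = (2 ^ 12 * (800000000 * 2 * 32) / n) ^ n := by
        rw [← mul_pow]
        field_simp
    _ ≤ (2 ^ 48 / n) ^ n := by gcongr; norm_num

end FirstMoment

section EvenMoment

variable {V : Type*} [NormedAddCommGroup V] [InnerProductSpace ℝ V] [MeasurableSpace V]
  [BorelSpace V] [FiniteDimensional ℝ V] {C : Set V}

theorem le_setIntegral_abs_inner_pow (hC : IsCompact C) {m : ℕ} {ξ : V}
    (hξ : 1 / 4 ≤ absMoment C (m + 2 : ℕ) ξ)
    (hξ' : absMoment C (2 * (m + 2 : ℕ)) ξ ≤ 16 ^ (m + 2)) :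
    1 / 2 ^ 17 ≤ ∫ x in C ∩ {x | |⟪x, ξ⟫| ≤ 128}, |⟪x, ξ⟫| ^ m := by
  have hint : ∀ k : ℕ, IntegrableOn (fun x => |⟪x, ξ⟫| ^ k) C := fun k =>
    integrableOn_of_continuous_of_isBounded hC.isBounded (by fun_prop)
  rw [absMoment_natCast] at hξ
  rw [← Nat.cast_ofNat, ← Nat.cast_mul, absMoment_natCast] at hξ'
  have tail : ((1 : ℝ) / 128) ^ (m + 2) * ∫ x in C, |⟪x, ξ⟫| ^ (2 * (m + 2)) ≤ 1 / 8 := by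
    calc _ ≤ ((1 : ℝ) / 128) ^ (m + 2) * 16 ^ (m + 2) := by gcongr
      _ = (1 / 8) ^ (m + 2) := by rw [← mul_pow]; norm_num
      _ ≤ 1 / 8 := pow_le_of_le_one (by norm_num) (by norm_num) (by omega)
  calc (1 / 2 ^ 17 : ℝ) = 1 / 2 ^ 14 * (1 / 4 - 1 / 8) := by norm_num
    _ ≤ ∫ x in C, 1 / 2 ^ 14 *
          (|⟪x, ξ⟫| ^ (m + 2) - (1 / 128) ^ (m + 2) * |⟪x, ξ⟫| ^ (2 * (m + 2))) := by
        rw [integral_const_mul, integral_sub (hint _) ((hint _).const_mul _), integral_const_mul]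
        gcongr
    _ ≤ ∫ x in C ∩ {x | |⟪x, ξ⟫| ≤ 128}, |⟪x, ξ⟫| ^ m := by
        refine setIntegral_le_setIntegral_inter (hint m)
          (((hint _).sub ((hint _).const_mul _)).const_mul _)
          (measurableSet_le (by fun_prop) measurable_const) (fun x hx => ?_) fun x hx => ?_
        · have hle : |⟪x, ξ⟫| ≤ 128 := hx
          have hpow : |⟪x, ξ⟫| ^ (m + 2) ≤ 2 ^ 14 * |⟪x, ξ⟫| ^ m := by
            rw [pow_add, mul_comm, show (2 : ℝ) ^ 14 = 128 ^ 2 by norm_num]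
            gcongr
          have : 0 ≤ (1 / 128) ^ (m + 2) * |⟪x, ξ⟫| ^ (2 * (m + 2)) := by positivity
          linarith
        · have hlt : 128 < |⟪x, ξ⟫| := not_le.1 hx
          have : |⟪x, ξ⟫| ^ (m + 2) ≤ (1 / 128) ^ (m + 2) * |⟪x, ξ⟫| ^ (2 * (m + 2)) := by
            rw [one_div, inv_pow, le_inv_mul_iff₀ (by positivity), two_mul, pow_add _ (m + 2)]
            gcongr
          linarith

theorem abs_setIntegral_inner_pow_mul_inner_le_one (hC : IsCompact C) {m : ℕ} {ξ η : V}
    (hξ : ξ ∈ momentBody C (m + 1 : ℕ)) (hη : η ∈ momentBody C (m + 1 : ℕ)) :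
    |∫ x in C, ⟪x, ξ⟫ ^ m * ⟪x, η⟫| ≤ 1 := by
  have young := setIntegral_rpow_sub_one_mul_le_one hC (by simp) hξ hη
  simp only [Nat.cast_add_one, add_sub_cancel_right, Real.rpow_natCast, ← abs_pow, ← abs_mul]
    at young
  exact abs_integral_le_integral_abs.trans young

theorem volume_mul_volume_momentBody_add_two_le {n : ℕ} (hn : 0 < n)
    (hdim : Module.finrank ℝ V = n) (hC : IsCompact C) (hC0 : C ∈ nhds 0) {m : ℕ} (hm : Even m)
    {S : Set V} (hS : MeasurableSet S) (hSm : S ⊆ momentBody C (m + 2 : ℕ))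
    (hSm' : ∀ ξ ∈ S, 1 / 4 ≤ absMoment C (m + 2 : ℕ) ξ)
    (hS2m : ∀ ξ ∈ S, absMoment C (2 * (m + 2 : ℕ)) ξ ≤ 16 ^ (m + 2)) :
    volume.real S * volume.real (momentBody C (m + 2 : ℕ)) ≤
      (2 ^ 18 * 128 ^ m) ^ 2 * (800000000 * 2 ^ 17 / ((m + 1) * n)) ^ n := by
  have hcompact := isCompact_momentBody (p := (m + 2 : ℕ)) hC hC0 (by positivity)
  refine (volume_mul_volume_le_of_momentMap hn hdim hC.measurableSet
    hC.isBounded hC0 (ψ := fun t => t ^ (m + 1)) (ψ' := fun t => (m + 1) * t ^ m)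
    (fun t => by simpa using hasDerivAt_pow (m + 1) t) hm.add_one.strictMono_pow (by fun_prop)
    (fun t => mul_nonneg (by positivity) (hm.pow_nonneg t))
    (fun t ht => mul_pos (by positivity) (hm.pow_pos ht))
    (W := (m + 1) * 128 ^ m) (μ := (m + 1) * (1 / 2 ^ 17)) (κ := 1) (by positivity)
    (by positivity) one_pos hS (hcompact.isBounded.subset hSm)
    (fun hS0 => by
      have := hSm' 0 hS0
      rw [absMoment_zero_right (by positivity)] at this
      norm_num at this)
    hcompact.measurableSet hcompact.measure_lt_top.ne
    (fun ξ hξ => ⟨C ∩ {x | |⟪x, ξ⟫| ≤ 128}, inter_subset_left,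
      hC.measurableSet.inter (measurableSet_le (by fun_prop) measurable_const),
      fun x hx => by
        have : |⟪x, ξ⟫| ≤ 128 := hx.2
        rw [← hm.pow_abs]
        gcongr,
      by
        simp_rw [integral_const_mul, ← hm.pow_abs ⟪_, ξ⟫]
        gcongr
        exact le_setIntegral_abs_inner_pow hC (hSm' ξ hξ) (hS2m ξ hξ)⟩)
    fun ξ hξ η hη => abs_setIntegral_inner_pow_mul_inner_le_one hC (hSm hξ) hη).trans_eq ?_
  field_simp

theorem volume_mul_volume_momentBody_le {n : ℕ} (hdim : Module.finrank ℝ V = n)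
    (hC : IsCompact C) (hC0 : C ∈ nhds 0) {k : ℕ} (hk : Even k) (hk0 : 0 < k) (hkn : k ≤ n)
    {S : Set V} (hS : MeasurableSet S) (hSk : S ⊆ momentBody C k)
    (hSk' : ∀ ξ ∈ S, 1 / 4 ≤ absMoment C k ξ) (hS2k : ∀ ξ ∈ S, absMoment C (2 * k) ξ ≤ 16 ^ k) :
    volume.real S * volume.real (momentBody C k) ≤ (2 ^ 70 / (n * k)) ^ n := by
  obtain ⟨m, rfl⟩ : ∃ m, k = m + 2 := ⟨k - 2, by obtain ⟨j, rfl⟩ := hk; omega⟩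
  have hm : Even m := by simpa [parity_simps] using hk
  have hn : (0 : ℝ) < n := by exact_mod_cast hk0.trans_le hkn
  have hfirst : ((2 ^ 18 * 128 ^ m) ^ 2 : ℝ) ≤ (2 ^ 22) ^ n := by
    rw [show (128 : ℝ) = 2 ^ 7 by norm_num, ← pow_mul, ← pow_add, ← pow_mul, ← pow_mul]
    exact pow_le_pow_right₀ (by norm_num) (by omega)
  have hsecond : (800000000 * 2 ^ 17 / ((m + 1) * n) : ℝ) ≤ 2 ^ 48 / (n * (m + 2 : ℕ)) := by
    rw [div_le_div_iff₀ (by positivity) (by positivity)]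
    push_cast
    have : (0 : ℝ) ≤ n * m := by positivity
    linarith
  calc volume.real S * volume.real (momentBody C (m + 2 : ℕ))
      ≤ (2 ^ 18 * 128 ^ m) ^ 2 * (800000000 * 2 ^ 17 / ((m + 1) * n)) ^ n :=
        volume_mul_volume_momentBody_add_two_le (hk0.trans_le hkn) hdim hC hC0 hm hS hSk hSk' hS2k
    _ ≤ (2 ^ 22) ^ n * (2 ^ 48 / (n * (m + 2 : ℕ))) ^ n := by gcongr
    _ = (2 ^ 70 / (n * (m + 2 : ℕ))) ^ n := by rw [← mul_pow, ← mul_div_assoc]; norm_num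

end EvenMoment

section ReverseHolder

variable {V : Type*} [NormedAddCommGroup V] [InnerProductSpace ℝ V] [MeasurableSpace V]
  [BorelSpace V] [FiniteDimensional ℝ V] {C : Set V} {p : ℝ} {n : ℕ}

/-- The part of `momentBody C p` where the norms of `⟪·, ξ⟫` satisfy the reverse Hölder inequality
`‖⟪·, ξ⟫‖_{2p} ≤ 4 ‖⟪·, ξ⟫‖_p`, written in terms of moments. -/
def reverseHolderBody (C : Set V) (p : ℝ) : Set V :=
  {ξ ∈ momentBody C p | absMoment C (2 * p) ξ ≤ 16 ^ p * absMoment C p ξ ^ 2}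

theorem reverseHolderBody_subset_momentBody : reverseHolderBody C p ⊆ momentBody C p :=
  fun _ hξ => hξ.1

theorem isClosed_reverseHolderBody (hC : IsCompact C) (hp : 0 ≤ p) :
    IsClosed (reverseHolderBody C p) :=
  (isClosed_momentBody hC hp).inter <| isClosed_le (continuous_absMoment hC (by positivity))
    (continuous_const.mul ((continuous_absMoment hC hp).pow 2))

theorem absMoment_two_mul_le_of_mem_reverseHolderBody {ξ : V} (hξ : ξ ∈ reverseHolderBody C p) :
    absMoment C (2 * p) ξ ≤ 16 ^ p :=
  hξ.2.trans (mul_le_of_le_one_right (by positivity) (pow_le_one₀ (absMoment_nonneg ξ) hξ.1))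

theorem smul_mem_reverseHolderBody {a : ℝ} (ha : 0 ≤ a) {ξ : V} (hξ : ξ ∈ reverseHolderBody C p)
    (haξ : a ^ p * absMoment C p ξ ≤ 1) : a • ξ ∈ reverseHolderBody C p := by
  rw [← absMoment_smul_of_nonneg ha] at haξ
  refine ⟨haξ, ?_⟩
  rw [absMoment_smul_of_nonneg ha, absMoment_smul_of_nonneg ha, mul_comm 2 p, Real.rpow_mul ha,
    Real.rpow_two, mul_comm p 2]
  calc (a ^ p) ^ 2 * absMoment C (2 * p) ξ
      ≤ (a ^ p) ^ 2 * (16 ^ p * absMoment C p ξ ^ 2) := by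
        gcongr
        exact hξ.2
    _ = 16 ^ p * (a ^ p * absMoment C p ξ) ^ 2 := by ring

theorem volume_real_smul_of_nonneg (hdim : Module.finrank ℝ V = n) {a : ℝ} (ha : 0 ≤ a)
    (S : Set V) : volume.real (a • S) = a ^ n * volume.real S := by
  rw [measureReal_def, Measure.addHaar_smul_of_nonneg _ ha, ENNReal.toReal_mul, hdim,
    ENNReal.toReal_ofReal (by positivity), measureReal_def]

/- A vector of `reverseHolderBody C p` whose `p`-th moment is less than `1 / 4` stays in it when it
is dilated by `4 ^ (1 / p)`, and this dilation multiplies volumes by `4 ^ (n / p) ≥ 4`. -/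
theorem volume_reverseHolderBody_le (hdim : Module.finrank ℝ V = n) (hC : IsCompact C)
    (hC0 : C ∈ nhds 0) (hp : 0 < p) (hpn : p ≤ n) :
    volume.real (reverseHolderBody C p) ≤
      2 * volume.real (reverseHolderBody C p ∩ {ξ | 1 / 4 ≤ absMoment C p ξ}) := by
  set T := reverseHolderBody C p
  set l : ℝ := (1 / 4) ^ p⁻¹
  have hl0 : 0 < l := by positivity
  have hlp : l ^ p = 1 / 4 := Real.rpow_inv_rpow (by norm_num) hp.ne'
  have hln : l ^ n ≤ 1 / 4 := by
    calc l ^ n = (1 / 4 : ℝ) ^ (p⁻¹ * n) := by rw [Real.rpow_mul_natCast (by norm_num)]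
      _ ≤ (1 / 4 : ℝ) ^ (1 : ℝ) := Real.rpow_le_rpow_of_exponent_ge (by norm_num) (by norm_num)
          (by rwa [le_inv_mul_iff₀ hp, mul_one])
      _ = 1 / 4 := Real.rpow_one _
  have hTfin : volume T ≠ ∞ := ((isBounded_momentBody hC hC0 hp).subset
    reverseHolderBody_subset_momentBody).measure_lt_top.ne
  have hcover : T ⊆ T ∩ {ξ | 1 / 4 ≤ absMoment C p ξ} ∪ l • T := by
    intro ξ hξ
    rcases le_or_gt (1 / 4) (absMoment C p ξ) with hlarge | hsmall
    · exact .inl ⟨hξ, hlarge⟩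
    · refine .inr ((mem_smul_set_iff_inv_smul_mem₀ hl0.ne' _ _).2
        (smul_mem_reverseHolderBody (by positivity) hξ ?_))
      rw [Real.inv_rpow hl0.le, hlp]
      linarith
  have hvol : volume.real T ≤
      volume.real (T ∩ {ξ | 1 / 4 ≤ absMoment C p ξ}) + l ^ n * volume.real T := by
    rw [← volume_real_smul_of_nonneg hdim hl0.le]
    refine (measureReal_mono hcover ?_).trans (measureReal_union_le _ _)
    exact measure_union_ne_top (measure_ne_top_of_subset inter_subset_left hTfin)
      (by rw [Measure.addHaar_smul]; exact ENNReal.mul_ne_top ENNReal.ofReal_ne_top hTfin)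
  have : l ^ n * volume.real T ≤ 1 / 4 * volume.real T := by gcongr
  linarith [measureReal_nonneg (μ := volume) (s := T)]

theorem volume_momentBody_two_mul_le (hdim : Module.finrank ℝ V = n) (hC : IsCompact C)
    (hC1 : volume.real C = 1) (hC0 : C ∈ nhds 0) (hp : 0 < p) :
    volume.real (momentBody C (2 * p)) ≤
      volume.real (reverseHolderBody C p) + (1 / 4) ^ n * volume.real (momentBody C p) := by
  have hcover : momentBody C (2 * p) ⊆ reverseHolderBody C p ∪ (1 / 4 : ℝ) • momentBody C p := by
    intro ξ hξ
    rcases le_or_gt ((1 / 4 : ℝ) ^ p) (absMoment C p ξ) with hlarge | hsmall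
    · refine .inl ⟨momentBody_subset_of_le hC hC1 hp.le (by positivity) (by linarith) hξ, ?_⟩
      calc absMoment C (2 * p) ξ ≤ 1 := hξ
        _ = 16 ^ p * ((1 / 4) ^ p) ^ 2 := by
            rw [← Real.rpow_mul_natCast (by norm_num), mul_comm p, Real.rpow_mul (by norm_num),
              ← Real.mul_rpow (by norm_num) (by positivity)]
            norm_num
        _ ≤ 16 ^ p * absMoment C p ξ ^ 2 := by gcongr
    · refine .inr ((mem_smul_set_iff_inv_smul_mem₀ (by norm_num) _ _).2 ?_)
      change absMoment C p _ ≤ 1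
      rw [absMoment_smul_of_nonneg (by norm_num), Real.inv_rpow (by norm_num),
        inv_mul_le_iff₀ (by positivity), mul_one]
      exact hsmall.le
  have hbounded := isBounded_momentBody hC hC0 hp
  rw [← volume_real_smul_of_nonneg hdim (by norm_num)]
  exact (measureReal_mono hcover (measure_union_ne_top
    (hbounded.subset reverseHolderBody_subset_momentBody).measure_lt_top.ne
    (hbounded.smul₀ _).measure_lt_top.ne)).trans (measureReal_union_le _ _)

theorem sq_volume_momentBody_two_mul_le (hdim : Module.finrank ℝ V = n) (hC : IsCompact C)
    (hC1 : volume.real C = 1) (hC0 : C ∈ nhds 0) {k : ℕ} (hk : Even k) (hk0 : 0 < k)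
    (hkn : k ≤ n) :
    volume.real (momentBody C (2 * k)) ^ 2 ≤
      2 * (2 ^ 70 / (n * k)) ^ n + (1 / 4) ^ n * volume.real (momentBody C k) ^ 2 := by
  have hk0' : (0 : ℝ) < k := by exact_mod_cast hk0
  have hclosed : IsClosed (reverseHolderBody C k ∩ {ξ | 1 / 4 ≤ absMoment C k ξ}) :=
    (isClosed_reverseHolderBody hC hk0'.le).inter
      (isClosed_le continuous_const (continuous_absMoment hC hk0'.le))
  have hproduct := volume_mul_volume_momentBody_le hdim hC hC0 hk hk0 hkn hclosed.measurableSet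
    (fun ξ hξ => hξ.1.1) (fun ξ hξ => hξ.2) fun ξ hξ => by
      simpa using absMoment_two_mul_le_of_mem_reverseHolderBody hξ.1
  set u := volume.real (momentBody C k)
  set v := volume.real (momentBody C (2 * k))
  have hvu : v ≤ u := volume_momentBody_le_of_le hC hC1 hC0 hk0' (by linarith)
  have hv : v ≤ 2 * volume.real (reverseHolderBody C k ∩ {ξ | 1 / 4 ≤ absMoment C k ξ}) +
      (1 / 4) ^ n * u :=
    (volume_momentBody_two_mul_le hdim hC hC1 hC0 hk0').trans <| by
      gcongr
      exact volume_reverseHolderBody_le hdim hC hC0 hk0' (by exact_mod_cast hkn)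
  calc v ^ 2 = v * v := sq v
    _ ≤ (2 * volume.real (reverseHolderBody C k ∩ {ξ | 1 / 4 ≤ absMoment C k ξ}) +
        (1 / 4) ^ n * u) * u := by gcongr
    _ ≤ 2 * (2 ^ 70 / (n * k)) ^ n + (1 / 4) ^ n * u ^ 2 := by linarith

end ReverseHolder

section VolumeMomentBody

theorem two_mul_pow_le {n : ℕ} (hn : n ≠ 0) {x : ℝ} (hx : 0 ≤ x) : 2 * x ^ n ≤ (2 * x) ^ n := by
  rw [mul_pow]
  gcongr
  exact le_self_pow₀ one_le_two hn

variable {V : Type*} [NormedAddCommGroup V] [InnerProductSpace ℝ V] [MeasurableSpace V]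
  [BorelSpace V] [FiniteDimensional ℝ V] {C : Set V} {n : ℕ}

theorem sq_volume_momentBody_two_pow_le (hn : 0 < n) (hdim : Module.finrank ℝ V = n)
    (hC : IsCompact C) (hC1 : volume.real C = 1) (hC0 : C ∈ nhds 0) {i : ℕ} (hi : 2 ^ i ≤ 2 * n) :
    volume.real (momentBody C (2 ^ i)) ^ 2 ≤ (2 ^ 73 / (n * 2 ^ i)) ^ n := by
  have first := sq_volume_momentBody_one_le hn hdim hC hC1 hC0
  induction i with
  | zero =>
    simp only [pow_zero, mul_one]
    exact first.trans (by gcongr <;> norm_num)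
  | succ i ih =>
    rcases i.eq_zero_or_pos with rfl | hi0
    · calc (volume.real (momentBody C (2 ^ (0 + 1))) ^ 2 : ℝ)
          ≤ volume.real (momentBody C 1) ^ 2 := by
            refine pow_le_pow_left₀ measureReal_nonneg ?_ 2
            exact volume_momentBody_le_of_le hC hC1 hC0 one_pos (one_le_pow₀ one_le_two)
        _ ≤ (2 ^ 48 / n : ℝ) ^ n := first
        _ ≤ (2 ^ 73 / (n * 2 ^ (0 + 1)) : ℝ) ^ n := by
            rw [← div_div, div_right_comm]
            gcongr
            norm_num
    · have step := sq_volume_momentBody_two_mul_le hdim hC hC1 hC0 (k := 2 ^ i)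
        (even_two.pow_of_ne_zero hi0.ne') (by positivity) (by rw [pow_succ] at hi; omega)
      push_cast [← pow_succ'] at step
      set y : ℝ := 1 / (n * 2 ^ i)
      have hy : 0 ≤ y := by positivity
      calc volume.real (momentBody C (2 ^ (i + 1))) ^ 2
          ≤ 2 * (2 ^ 70 / (n * 2 ^ i)) ^ n +
              (1 / 4) ^ n * volume.real (momentBody C (2 ^ i)) ^ 2 := step
        _ ≤ 2 * (2 ^ 70 * y) ^ n + (1 / 4) ^ n * (2 ^ 73 * y) ^ n := by
            rw [mul_one_div, mul_one_div]
            gcongr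
            exact ih (by rw [pow_succ] at hi; omega)
        _ ≤ (2 * (2 ^ 70 * y)) ^ n + (1 / 4 * (2 ^ 73 * y)) ^ n := by
            rw [mul_pow (1 / 4)]
            gcongr
            exact two_mul_pow_le hn.ne' (by positivity)
        _ = 2 * (2 ^ 71 * y) ^ n := by ring_nf
        _ ≤ (2 * (2 ^ 71 * y)) ^ n := two_mul_pow_le hn.ne' (by positivity)
        _ = (2 ^ 73 / (n * 2 ^ (i + 1))) ^ n := by
            simp only [y]
            congr 1
            field_simp
            ring

theorem volume_momentBody_le (hn : 0 < n) (hdim : Module.finrank ℝ V = n) (hC : IsCompact C)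
    (hC1 : volume.real C = 1) (hC0 : C ∈ nhds 0) {p : ℝ} (hp : 1 ≤ p) :
    volume.real (momentBody C p) ≤ (2 ^ 37 / n * √((n + p) / p)) ^ n := by
  have hn1 : (1 : ℝ) ≤ n := by exact_mod_cast hn
  obtain ⟨i, him, hmi⟩ := exists_nat_pow_near (le_min hp hn1) one_lt_two
  rw [le_min_iff] at him
  have hin : 2 ^ i ≤ n := by exact_mod_cast him.2
  have hmin : n * p ≤ 2 * 2 ^ i * (n + p) := by
    rw [← pow_succ']
    rcases min_lt_iff.1 hmi with h | h <;> nlinarith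
  refine (pow_le_pow_iff_left₀ (by positivity) (by positivity) two_ne_zero).1 ?_
  calc (volume.real (momentBody C p) ^ 2 : ℝ) ≤ volume.real (momentBody C (2 ^ i)) ^ 2 := by
        refine pow_le_pow_left₀ measureReal_nonneg ?_ 2
        exact volume_momentBody_le_of_le hC hC1 hC0 (by positivity) him.1
    _ ≤ (2 ^ 73 / (n * 2 ^ i) : ℝ) ^ n :=
        sq_volume_momentBody_two_pow_le hn hdim hC hC1 hC0 (by omega)
    _ ≤ ((2 ^ 37 / n : ℝ) ^ 2 * ((n + p) / p)) ^ n := by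
        refine pow_le_pow_left₀ (by positivity) ?_ n
        rw [div_pow, div_mul_div_comm, div_le_div_iff₀ (by positivity) (by positivity)]
        calc (2 : ℝ) ^ 73 * (n ^ 2 * p) = 2 ^ 73 * n * (n * p) := by ring
          _ ≤ 2 ^ 73 * n * (2 * 2 ^ i * (n + p)) := by gcongr
          _ = (2 ^ 37) ^ 2 * (n + p) * (n * 2 ^ i) := by ring
    _ = ((2 ^ 37 / n * √((n + p) / p)) ^ n) ^ 2 := by
        rw [pow_right_comm, mul_pow (2 ^ 37 / (n : ℝ)), Real.sq_sqrt (by positivity)]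

end VolumeMomentBody

namespace IsSymmetricConvexBody

variable {n : ℕ} {K : Set (E n)}

theorem smul (hK : IsSymmetricConvexBody K) {a : ℝ} (ha : a ≠ 0) :
    IsSymmetricConvexBody (a • K) := by
  refine ⟨hK.isCompact.smul a, hK.convex.smul a, ?_, ?_⟩
  · rw [← smul_zero a, interior_smul₀ ha]
    exact smul_mem_smul_set hK.2.2.1
  · rintro _ ⟨x, hx, rfl⟩
    exact ⟨-x, hK.neg_mem hx, smul_neg a x⟩

theorem abs_inner_le_one (hK : IsSymmetricConvexBody K) {x y : E n}
    (hx : x ∈ _root_.polarSet K) (hy : y ∈ K) : |⟪x, y⟫| ≤ 1 := by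
  have hneg := hx _ (hK.neg_mem hy)
  rw [inner_neg_right] at hneg
  exact abs_le.2 ⟨by linarith, hx y hy⟩

theorem polarSet_polarSet (hK : IsSymmetricConvexBody K) :
    _root_.polarSet (_root_.polarSet K) = K := by
  ext x
  refine ⟨fun hx => ?_, fun hx y hy => by rw [real_inner_comm]; exact hy x hx⟩
  by_contra hxK
  obtain ⟨f, u, hf, hu⟩ := geometric_hahn_banach_closed_point hK.convex hK.isCompact.isClosed hxK
  have hu0 : 0 < u := by simpa using hf 0 hK.zero_mem
  set y : E n := (InnerProductSpace.toDual ℝ (E n)).symm f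
  have hinner : ∀ z, ⟪y, z⟫ = f z := fun z => by simp [y]
  have hy : u⁻¹ • y ∈ _root_.polarSet K := fun z hz => by
    rw [real_inner_smul_left, hinner, inv_mul_le_one₀ hu0]
    exact (hf z hz).le
  have hfx := hx _ hy
  rw [real_inner_smul_right, real_inner_comm, hinner, inv_mul_le_one₀ hu0] at hfx
  linarith

end IsSymmetricConvexBody

section Normalization

variable {V : Type*} [NormedAddCommGroup V] [InnerProductSpace ℝ V] [MeasurableSpace V]
  [BorelSpace V] [FiniteDimensional ℝ V] {n : ℕ}

theorem rpow_neg_one_div_pow (hn : n ≠ 0) {v : ℝ} (hv : 0 ≤ v) :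
    (v ^ (-(1 : ℝ) / n)) ^ n = v⁻¹ := by
  rw [← Real.rpow_mul_natCast hv, div_mul_cancel₀ _ (Nat.cast_ne_zero.2 hn), Real.rpow_neg_one]

theorem volume_real_rpow_smul (hn : n ≠ 0) (hdim : Module.finrank ℝ V = n) {S : Set V}
    (hS : volume.real S ≠ 0) :
    volume.real (volume.real S ^ (-(1 : ℝ) / n) • S) = 1 := by
  rw [volume_real_smul_of_nonneg hdim (Real.rpow_nonneg measureReal_nonneg _),
    rpow_neg_one_div_pow hn measureReal_nonneg, inv_mul_cancel₀ hS]

end Normalization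

section AbsMoment

variable {V : Type*} [NormedAddCommGroup V] [InnerProductSpace ℝ V] [MeasurableSpace V]
  [BorelSpace V] [FiniteDimensional ℝ V] {C : Set V} {p : ℝ}

theorem convexOn_absMoment (hC : IsCompact C) (hp : 1 ≤ p) :
    ConvexOn ℝ univ (absMoment C p) := by
  refine ⟨convex_univ, fun ξ _ η _ s t hs ht hst => ?_⟩
  have hint : ∀ ζ, IntegrableOn (fun x => |⟪x, ζ⟫| ^ p) C :=
    integrableOn_abs_inner_rpow hC (by positivity)
  rw [smul_eq_mul, smul_eq_mul, absMoment, absMoment, absMoment, ← integral_const_mul,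
    ← integral_const_mul, ← integral_add ((hint _).const_mul _) ((hint _).const_mul _)]
  refine integral_mono (hint _) (((hint _).const_mul _).add ((hint _).const_mul _)) fun x => ?_
  calc |⟪x, s • ξ + t • η⟫| ^ p ≤ (s * |⟪x, ξ⟫| + t * |⟪x, η⟫|) ^ p := by
        gcongr
        rw [inner_add_right, real_inner_smul_right, real_inner_smul_right]
        refine (abs_add_le _ _).trans_eq ?_
        rw [abs_mul, abs_mul, abs_of_nonneg hs, abs_of_nonneg ht]
    _ ≤ s * |⟪x, ξ⟫| ^ p + t * |⟪x, η⟫| ^ p :=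
        (convexOn_rpow hp).2 (mem_Ici.2 (abs_nonneg _)) (mem_Ici.2 (abs_nonneg _)) hs ht hst

theorem mem_momentBody_of_abs_inner_le_one (hC : IsCompact C) (hC1 : volume.real C ≤ 1)
    (hp : 0 ≤ p) {ξ : V} (hξ : ∀ x ∈ C, |⟪x, ξ⟫| ≤ 1) : ξ ∈ momentBody C p :=
  calc absMoment C p ξ ≤ ∫ _ in C, (1 : ℝ) :=
        setIntegral_mono_on (integrableOn_abs_inner_rpow hC hp ξ)
          (integrableOn_const hC.measure_lt_top.ne) hC.measurableSet
          fun x hx => Real.rpow_le_one (abs_nonneg _) (hξ x hx) hp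
    _ ≤ 1 := by simpa using hC1

/- The sphere measure is the image of `‖x‖ ^ p dx` on `C` under the radial projection. -/
theorem exists_measure_sphere_absMoment_eq [Nontrivial V] (hC : IsCompact C) (hp : 0 < p) :
    ∃ ν : Measure (sphere (0 : V) 1), IsFiniteMeasure ν ∧
      ∀ ξ : V, absMoment C p ξ = ∫ θ : sphere (0 : V) 1, |⟪ξ, (θ : V)⟫| ^ p ∂ν := by
  classical
  obtain ⟨e, he⟩ := (NormedSpace.sphere_nonempty (E := V) (x := 0) (r := 1)).2 zero_le_one
  have hmem : ∀ x : V, (if x = 0 then e else ‖x‖⁻¹ • x) ∈ sphere (0 : V) 1 := fun x => by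
    split_ifs with hx
    · exact he
    · rw [mem_sphere_zero_iff_norm, norm_smul, norm_inv, norm_norm,
        inv_mul_cancel₀ (norm_ne_zero_iff.2 hx)]
  set radial : V → sphere (0 : V) 1 := fun x => ⟨_, hmem x⟩
  have hradial : Measurable radial :=
    (Measurable.ite (measurableSet_singleton 0) measurable_const (by fun_prop)).subtype_mk
  have hpolar : ∀ x ξ : V, ‖x‖ ^ p * |⟪ξ, (radial x : V)⟫| ^ p = |⟪x, ξ⟫| ^ p := fun x ξ => by
    rw [← Real.mul_rpow (norm_nonneg x) (abs_nonneg _), ← abs_of_nonneg (norm_nonneg x), ← abs_mul,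
      ← real_inner_smul_right, real_inner_comm]
    rcases eq_or_ne x 0 with rfl | hx
    · simp
    · simp [radial, hx, smul_smul]
  have hweight : Continuous fun x : V => ‖x‖ ^ p := continuous_norm.rpow_const fun _ => .inr hp.le
  set weighted := (volume.restrict C).withDensity fun x => ((‖x‖ ^ p).toNNReal : ℝ≥0∞)
  have : IsFiniteMeasure weighted := isFiniteMeasure_withDensity_ofReal
    (hweight.continuousOn.integrableOn_compact hC).hasFiniteIntegral
  refine ⟨weighted.map radial, Measure.isFiniteMeasure_map _ _, fun ξ => ?_⟩
  rw [integral_map hradial.aemeasurable (Continuous.aestronglyMeasurable <|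
      (continuous_const.inner continuous_subtype_val).abs.rpow_const fun _ => .inr hp.le),
    integral_withDensity_eq_integral_smul hweight.measurable.real_toNNReal, absMoment]
  refine integral_congr_ae (.of_forall fun x => ?_)
  dsimp only
  rw [NNReal.smul_def, Real.coe_toNNReal _ (by positivity), smul_eq_mul, hpolar]

end AbsMoment

section MomentBall

variable {n : ℕ} {C : Set (E n)} {p : ℝ}

theorem isSymmetricConvexBody_momentBody (hC : IsCompact C) (hC0 : C ∈ nhds 0) (hp : 1 ≤ p) :
    IsSymmetricConvexBody (momentBody C p) := by
  have hp0 : 0 < p := by positivity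
  refine ⟨isCompact_momentBody hC hC0 hp0, ?_, ?_, fun x hx => ?_⟩
  · simpa [momentBody] using (convexOn_absMoment hC hp).convex_le 1
  · refine interior_maximal (t := {ξ | absMoment C p ξ < 1})
      (fun ξ (hξ : absMoment C p ξ < 1) => hξ.le)
      (isOpen_lt (continuous_absMoment hC hp0.le) continuous_const) ?_
    rw [mem_ofPred_eq, absMoment_zero_right hp0.ne']
    exact one_pos
  · change absMoment C p (-x) ≤ 1
    rw [← neg_one_smul ℝ x, absMoment_smul, abs_neg, abs_one, Real.one_rpow, one_mul]
    exact hx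

theorem gauge_momentBody (hC : IsCompact C) (hC0 : C ∈ nhds 0) (hp : 1 ≤ p) (ξ : E n) :
    gauge (momentBody C p) ξ = absMoment C p ξ ^ (1 / p) := by
  have hp0 : 0 < p := by positivity
  have hbody := isSymmetricConvexBody_momentBody hC hC0 hp
  have hle_iff : ∀ s, 0 < s → (gauge (momentBody C p) ξ ≤ s ↔ absMoment C p ξ ^ (1 / p) ≤ s) := by
    intro s hs
    have hscaled : gauge (momentBody C p) (s⁻¹ • ξ) ≤ 1 ↔ absMoment C p (s⁻¹ • ξ) ≤ 1 :=
      hbody.gauge_le_one_iff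
    rw [hbody.gauge_smul, absMoment_smul_of_nonneg (by positivity), abs_of_pos (by positivity),
      Real.inv_rpow hs.le, inv_mul_le_one₀ hs, inv_mul_le_one₀ (by positivity)] at hscaled
    rw [hscaled, one_div, Real.rpow_inv_le_iff_of_pos (absMoment_nonneg ξ) hs.le hp0]
  refine le_antisymm (le_of_forall_gt_imp_ge_of_dense fun s hs => ?_)
    (le_of_forall_gt_imp_ge_of_dense fun s hs => ?_)
  · exact (hle_iff s ((Real.rpow_nonneg (absMoment_nonneg ξ) _).trans_lt hs)).2 hs.le
  · exact (hle_iff s ((gauge_nonneg ξ).trans_lt hs)).1 hs.le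

theorem Zp_eq_polarSet_momentBody (hC : IsCompact C) (hC0 : C ∈ nhds 0) (hp : 1 ≤ p) :
    Zp n p C = polarSet (momentBody C p) := by
  have hbody := isSymmetricConvexBody_momentBody hC hC0 hp
  ext y
  refine ⟨fun hy θ hθ => (hy θ).trans
    (Real.rpow_le_one (absMoment_nonneg θ) hθ (by positivity)), fun hy θ => ?_⟩
  calc ⟪y, θ⟫ ≤ gauge (momentBody C p) θ * gauge (polarSet (momentBody C p)) y :=
        hbody.inner_le_gauge_mul_gauge_polarSet y θ
    _ ≤ gauge (momentBody C p) θ :=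
        mul_le_of_le_one_right (gauge_nonneg θ) (gauge_le_one_of_mem hy)
    _ = absMoment C p θ ^ (1 / p) := gauge_momentBody hC hC0 hp θ

theorem polarSet_Zp (hC : IsCompact C) (hC0 : C ∈ nhds 0) (hp : 1 ≤ p) :
    polarSet (Zp n p C) = momentBody C p := by
  rw [Zp_eq_polarSet_momentBody hC hC0 hp,
    (isSymmetricConvexBody_momentBody hC hC0 hp).polarSet_polarSet]

theorem isLpBall_momentBody (hn : n ≠ 0) (hC : IsCompact C) (hC0 : C ∈ nhds 0) (hp : 1 ≤ p) :
    IsLpBall n p (momentBody C p) := by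
  have hp0 : 0 < p := by positivity
  have : NeZero n := ⟨hn⟩
  obtain ⟨ν, hν, hmoment⟩ := exists_measure_sphere_absMoment_eq hC hp0
  refine ⟨isSymmetricConvexBody_momentBody hC hC0 hp, ν, hν, fun ξ => ?_⟩
  rw [← hmoment, gauge_momentBody hC hC0 hp, one_div,
    Real.rpow_inv_rpow (absMoment_nonneg ξ) hp0.ne']

theorem IsLpBall.smul {D : Set (E n)} (hD : IsLpBall n p D) {a : ℝ} (ha : 0 < a) :
    IsLpBall n p (a • D) := by
  obtain ⟨hbody, ν, hν, hgauge⟩ := hD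
  refine ⟨hbody.smul ha.ne', (a⁻¹ ^ p).toNNReal • ν, inferInstance, fun x => ?_⟩
  rw [integral_smul_nnreal_measure, NNReal.smul_def, Real.coe_toNNReal _ (by positivity),
    smul_eq_mul, ← hgauge, gauge_smul_left_of_nonneg ha.le, Pi.smul_apply, smul_eq_mul,
    Real.mul_rpow (by positivity) (gauge_nonneg x)]

theorem dovrLp_le {K D : Set (E n)} (hKD : K ⊆ D) (hD : IsLpBall n p D) :
    dovrLp n p K ≤ (volume.real D / volume.real K) ^ ((1 : ℝ) / n) := by
  refine csInf_le ⟨0, ?_⟩ ⟨D, hKD, hD, rfl⟩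
  rintro _ ⟨D', -, -, rfl⟩
  positivity

end MomentBall

namespace IsSymmetricConvexBody

variable {n : ℕ} {K : Set (E n)} {a p : ℝ}

theorem subset_smul_momentBody (hK : IsSymmetricConvexBody K) (ha : 0 < a)
    (hvol : volume.real (a • _root_.polarSet K) = 1) (hp : 0 ≤ p) :
    K ⊆ a • momentBody (a • _root_.polarSet K) p := by
  intro x hx
  rw [mem_smul_set_iff_inv_smul_mem₀ ha.ne']
  refine mem_momentBody_of_abs_inner_le_one (hK.polarSet.smul ha.ne').isCompact hvol.le hp ?_
  rintro _ ⟨w, hw, rfl⟩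
  dsimp only
  rw [real_inner_smul_left, real_inner_smul_right, mul_inv_cancel_left₀ ha.ne']
  exact hK.abs_inner_le_one hw hx

theorem volume_smul_momentBody_div_le (hn : 0 < n) (hK : IsSymmetricConvexBody K) (ha : 0 < a)
    (hvol : volume.real (a • _root_.polarSet K) = 1) (hp : 1 ≤ p) :
    volume.real (a • momentBody (a • _root_.polarSet K) p) / volume.real K ≤
      (2 ^ 39 * √((n + p) / p)) ^ n := by
  have hdim : Module.finrank ℝ (E n) = n := finrank_euclideanSpace_fin
  have hC := hK.polarSet.smul ha.ne'
  have hmoment := volume_momentBody_le hn hdim hC.isCompact hvol hC.mem_nhds_zero hp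
  have hmahler : (1 / (4 * n) : ℝ) ^ n * a ^ n ≤ volume.real K := by
    calc (1 / (4 * n) : ℝ) ^ n * a ^ n
        ≤ volume.real K * volume.real (_root_.polarSet K) * a ^ n := by
          gcongr
          exact hK.pow_le_volume_mul_volume_polarSet hn
      _ = volume.real K * volume.real (a • _root_.polarSet K) := by
          rw [volume_real_smul_of_nonneg hdim ha.le]
          ring
      _ = volume.real K := by rw [hvol, mul_one]
  rw [div_le_iff₀ hK.volume_real_pos, volume_real_smul_of_nonneg hdim ha.le]
  calc a ^ n * volume.real (momentBody (a • _root_.polarSet K) p)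
      ≤ a ^ n * (2 ^ 37 / n * √((n + p) / p)) ^ n := by gcongr
    _ = (2 ^ 39 * √((n + p) / p)) ^ n * ((1 / (4 * n) : ℝ) ^ n * a ^ n) := by
        rw [← mul_pow, ← mul_pow, ← mul_pow]
        congr 1
        field_simp
        norm_num
    _ ≤ (2 ^ 39 * √((n + p) / p)) ^ n * volume.real K := by gcongr

end IsSymmetricConvexBody

/-- Theorem 3 (upper bound): the outer volume ratio distance to unit balls of subspaces
of L_p is at most c sqrt((n+p)/p), witnessed by the concrete body
L = |K°|^{-1/n} (Z_p(C))° with C = K°/|K°|^{1/n}. -/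
theorem dovrLp_upper_bound :
    ∃ c : ℝ, 0 < c ∧ ∀ (n : ℕ), 2 ≤ n → ∀ p : ℝ, 1 ≤ p →
      ∀ K : Set (E n), IsSymmetricConvexBody K →
        dovrLp n p K ≤ c * Real.sqrt (((n : ℝ) + p) / p) ∧
        (∀ C L : Set (E n),
          C = (volume (polarSet K)).toReal ^ (-(1 : ℝ) / n) • polarSet K →
          L = (volume (polarSet K)).toReal ^ (-(1 : ℝ) / n) • polarSet (Zp n p C) →
          K ⊆ L ∧ IsLpBall n p L ∧
            ((volume L).toReal / (volume K).toReal) ^ ((1 : ℝ) / n) ≤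
              c * Real.sqrt (((n : ℝ) + p) / p)) := by
  refine ⟨2 ^ 39, by positivity, fun n hn p hp K hK => ?_⟩
  have hn0 : n ≠ 0 := by omega
  set a := (volume (polarSet K)).toReal ^ (-(1 : ℝ) / n)
  have ha : 0 < a := Real.rpow_pos_of_pos hK.polarSet.volume_real_pos _
  have hvol : volume.real (a • polarSet K) = 1 :=
    volume_real_rpow_smul hn0 finrank_euclideanSpace_fin hK.polarSet.volume_real_pos.ne'
  have hC := hK.polarSet.smul ha.ne'
  have hsub := hK.subset_smul_momentBody ha hvol (zero_le_one.trans hp)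
  have hball := (isLpBall_momentBody hn0 hC.isCompact hC.mem_nhds_zero hp).smul ha
  have hratio : (volume.real (a • momentBody (a • polarSet K) p) / volume.real K) ^ ((1 : ℝ) / n) ≤
      2 ^ 39 * √((n + p) / p) := by
    rw [one_div, Real.rpow_inv_le_iff_of_pos (by positivity) (by positivity) (by positivity),
      Real.rpow_natCast]
    exact hK.volume_smul_momentBody_div_le (by omega) ha hvol hp
  refine ⟨(dovrLp_le hsub hball).trans hratio, ?_⟩
  rintro _ _ rfl rfl
  rw [polarSet_Zp hC.isCompact hC.mem_nhds_zero hp]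
  exact ⟨hsub, hball, hratio⟩
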